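/- arXiv:2111.14962 — 7 statements merged into one kernel-verified Lean document; each statement's English description precedes it below -/
import Mathlib

section
/- Let ℓ ≥ 1 and let Λ be a symmetric ℓ×ℓ integer matrix with columns Λ₁,…,Λ_ℓ. Suppose given, for each ε ∈ {0,1}^ℓ and each s ∈ ℤ^ℓ, an 𝔽₂-vector space C_ε(s), and for each pair ε ≤ ε′ (coordinatewise) and each function o from {i : ε_i < ε′_i} to {+,−}, an 𝔽₂-linear map Φ^{ε,ε′,o} : C_ε(s) → C_{ε′}(s + Σ_{i : o(i)=−} Λ_i) for every s (for ε = ε′ only the empty function o occurs, giving a map preserving s). Let C = ∏_{ε,s} C_ε(s) and let D : C → C be the sum of all the maps Φ^{ε,ε′,o}. For a = (a₁,…,a_ℓ) ∈ ℤ^ℓ define the 𝔽₂-linear endomorphism 𝔄_a = Σ_{i=1}^ℓ a_i · F^{K_i} (coefficients reduced mod 2), where F^{K_i} is the sum of all maps Φ^{ε,ε′,o} with o(i) = +. If there exist a positive integer N and x ∈ ℤ^ℓ with N·a = Λx, then there exists an 𝔽₂-linear map H : C → C with H(C_ε(s)) ⊆ C_ε(s) for all ε and s, such that 𝔄_a =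 D∘H + H∘D. -/
open scoped Classical

namespace LinkSurgeryHomologyAction

variable (ℓ : ℕ) (Λ : Matrix (Fin ℓ) (Fin ℓ) ℤ)
variable (C : (Fin ℓ → Bool) → (Fin ℓ → ℤ) → Type)
variable [∀ ε s, AddCommGroup (C ε s)] [∀ ε s, Module (ZMod 2) (C ε s)]

/-- The Alexander-grading shift `Σ_{i : o i = −} Λ_i` associated to an orientation `o`
of the components where `ε` and `ε'` differ (`o i = true` means `+`). -/
noncomputable def shiftV {ε ε' : Fin ℓ → Bool} (o : {i : Fin ℓ // ε i ≠ ε' i} → Bool) :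
    Fin ℓ → ℤ :=
  ∑ i : {i : Fin ℓ // ε i ≠ ε' i}, if o i then 0 else (fun j => Λ j i.1)

/-- The total complex `C = ∏_{ε,s} C_ε(s)`. -/
abbrev Tot : Type :=
  ∀ p : (Fin ℓ → Bool) × (Fin ℓ → ℤ), C p.1 p.2

/-- Transport along an equality of Alexander gradings. -/
def castC {ε : Fin ℓ → Bool} {s s' : Fin ℓ → ℤ} (h : s = s') :
    C ε s →ₗ[ZMod 2] C ε s' := by subst h; exact LinearMap.id

/-- The contribution of the map `Φ^{ε,ε',o}` to the component of the total complex at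
`(ε', s')`, namely `Φ^{ε,ε',o}` applied to the `(ε, s' − shift)` component. -/
noncomputable def piece
    (Φ : ∀ ε ε' : Fin ℓ → Bool, ε ≤ ε' → ∀ (o : {i : Fin ℓ // ε i ≠ ε' i} → Bool)
      (s : Fin ℓ → ℤ), C ε s →ₗ[ZMod 2] C ε' (s + shiftV ℓ Λ o))
    (ε : Fin ℓ → Bool) (p : (Fin ℓ → Bool) × (Fin ℓ → ℤ)) (hle : ε ≤ p.1)
    (o : {i : Fin ℓ // ε i ≠ p.1 i} → Bool) :
    Tot ℓ C →ₗ[ZMod 2] C p.1 p.2 :=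
  (castC ℓ C (by abel)) ∘ₗ (Φ ε p.1 hle o (p.2 - shiftV ℓ Λ o)) ∘ₗ
    (LinearMap.proj (ε, p.2 - shiftV ℓ Λ o))

/-- The total differential `D`: the sum of all the maps `Φ^{ε,ε',o}`. -/
noncomputable def Dtot
    (Φ : ∀ ε ε' : Fin ℓ → Bool, ε ≤ ε' → ∀ (o : {i : Fin ℓ // ε i ≠ ε' i} → Bool)
      (s : Fin ℓ → ℤ), C ε s →ₗ[ZMod 2] C ε' (s + shiftV ℓ Λ o)) :
    Tot ℓ C →ₗ[ZMod 2] Tot ℓ C :=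
  LinearMap.pi fun p =>
    ∑ ε : Fin ℓ → Bool,
      if hle : ε ≤ p.1 then
        ∑ o : {i : Fin ℓ // ε i ≠ p.1 i} → Bool, piece ℓ Λ C Φ ε p hle o
      else 0

/-- The map `F^{K_i}`: the sum of all the maps `Φ^{ε,ε',o}` with `o i = +`. -/
noncomputable def Fpos
    (Φ : ∀ ε ε' : Fin ℓ → Bool, ε ≤ ε' → ∀ (o : {i : Fin ℓ // ε i ≠ ε' i} → Bool)
      (s : Fin ℓ → ℤ), C ε s →ₗ[ZMod 2] C ε' (s + shiftV ℓ Λ o))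
    (i : Fin ℓ) :
    Tot ℓ C →ₗ[ZMod 2] Tot ℓ C :=
  LinearMap.pi fun p =>
    ∑ ε : Fin ℓ → Bool,
      if hle : ε ≤ p.1 then
        ∑ o : {i : Fin ℓ // ε i ≠ p.1 i} → Bool,
          if hd : ε i ≠ p.1 i then
            (if o ⟨i, hd⟩ then piece ℓ Λ C Φ ε p hle o else 0)
          else 0
      else 0

/-- The action `𝔄_a = Σᵢ aᵢ · F^{K_i}` (coefficients reduced mod 2). -/
noncomputable def Atot
    (Φ : ∀ ε ε' : Fin ℓ → Bool, ε ≤ ε' → ∀ (o : {i : Fin ℓ // ε i ≠ ε' i} → Bool)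
      (s : Fin ℓ → ℤ), C ε s →ₗ[ZMod 2] C ε' (s + shiftV ℓ Λ o))
    (a : Fin ℓ → ℤ) :
    Tot ℓ C →ₗ[ZMod 2] Tot ℓ C :=
  ∑ i : Fin ℓ, ((a i : ZMod 2)) • Fpos ℓ Λ C Φ i

noncomputable def gfun (a x : Fin ℓ → ℤ) (N : ℕ) (ε : Fin ℓ → Bool) (s : Fin ℓ → ℤ) : ZMod 2 :=
  (((x ⬝ᵥ s) / (N : ℤ) : ℤ) : ZMod 2) + ∑ i, if ε i then (a i : ZMod 2) else 0

theorem shift_dot (hΛ : Λ.IsSymm) (a : Fin ℓ → ℤ) (N : ℕ) (x : Fin ℓ → ℤ)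
    (hNa : (N : ℤ) • a = Λ.mulVec x) {ε ε' : Fin ℓ → Bool}
    (o : {i : Fin ℓ // ε i ≠ ε' i} → Bool) :
    x ⬝ᵥ shiftV ℓ Λ o = (N : ℤ) * ∑ i : {i : Fin ℓ // ε i ≠ ε' i}, if o i then 0 else a i.1 := by
  unfold shiftV
  rw [dotProduct_sum, Finset.mul_sum]
  refine Finset.sum_congr rfl fun i _ => ?_
  split_ifs
  · simp
  · have h := congrFun hNa i.1
    simp only [Pi.smul_apply, smul_eq_mul] at h
    rw [h, Matrix.mulVec, dotProduct_comm]
    congr 1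
    funext j
    exact hΛ.apply i.1 j

theorem bool_lt : ∀ b c : Bool, b ≤ c → b ≠ c → b = false ∧ c = true := by
  intro b c h1 h2
  cases b <;> cases c <;> simp_all
  exact absurd (h1 rfl) Bool.false_ne_true

theorem key (hΛ : Λ.IsSymm) (a : Fin ℓ → ℤ) (N : ℕ) (hN : 0 < N) (x : Fin ℓ → ℤ)
    (hNa : (N : ℤ) • a = Λ.mulVec x) {ε ε' : Fin ℓ → Bool} (hle : ε ≤ ε')
    (o : {i : Fin ℓ // ε i ≠ ε' i} → Bool) (s : Fin ℓ → ℤ) :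
    (∑ i, if hd : ε i ≠ ε' i then (if o ⟨i, hd⟩ then (a i : ZMod 2) else 0) else 0) =
    gfun ℓ a x N ε (s - shiftV ℓ Λ o) + gfun ℓ a x N ε' s := by
  have hs := shift_dot ℓ Λ hΛ a N x hNa o
  have h2 : ∀ z : ZMod 2, z + z = 0 := fun z => CharTwo.add_self_eq_zero z
  have hN' : (N : ℤ) ≠ 0 := by exact_mod_cast hN.ne'
  set T := ∑ i : {i : Fin ℓ // ε i ≠ ε' i}, (if o i then 0 else a i.1) with hT
  have hT2 : (T : ZMod 2) =
      ∑ i, if hd : ε i ≠ ε' i then (if o ⟨i, hd⟩ then 0 else (a i : ZMod 2)) else 0 := by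
    rw [Finset.sum_dite, Finset.sum_const_zero, add_zero, hT]
    push_cast
    symm
    refine Finset.sum_bij (fun i _ => ⟨i.1, (Finset.mem_filter.1 i.2).2⟩) ?_ ?_ ?_ ?_
    · simp
    · intro i _ j _ h
      exact Subtype.ext (Subtype.mk.inj h)
    · intro b _
      exact ⟨⟨b.1, by simpa using b.2⟩, by simp, rfl⟩
    · intro i _
      rfl
  have hdiv : (x ⬝ᵥ (s - shiftV ℓ Λ o)) / (N : ℤ) = (x ⬝ᵥ s) / (N : ℤ) - T := by
    rw [dotProduct_sub, hs, sub_eq_add_neg, ← mul_neg, Int.add_mul_ediv_left _ _ hN', sub_eq_add_neg]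
  unfold gfun
  rw [hdiv]
  push_cast
  have e : ∀ A B P Q : ZMod 2, A - B + P + (A + Q) = B + (P + Q) := by decide
  rw [e, hT2, ← Finset.sum_add_distrib, ← Finset.sum_add_distrib]
  refine Finset.sum_congr rfl fun i _ => ?_
  have hi := hle i
  by_cases hd : ε i ≠ ε' i
  · simp only [dif_pos hd]
    have hb := bool_lt _ _ hi hd
    have h0 : ε i = false := hb.1
    have h1 : ε' i = true := hb.2
    rw [h0, h1]
    generalize o ⟨i, hd⟩ = b
    cases b
    · simp only [Bool.false_eq_true, if_false, if_true, zero_add, h2]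
    · simp only [Bool.false_eq_true, if_false, if_true, zero_add]
  · simp only [dif_neg hd]
    rw [not_not] at hd
    rw [hd, h2, add_zero]

theorem piece_smul
    (Φ : ∀ ε ε' : Fin ℓ → Bool, ε ≤ ε' → ∀ (o : {i : Fin ℓ // ε i ≠ ε' i} → Bool)
      (s : Fin ℓ → ℤ), C ε s →ₗ[ZMod 2] C ε' (s + shiftV ℓ Λ o))
    (ε : Fin ℓ → Bool) (p : (Fin ℓ → Bool) × (Fin ℓ → ℤ)) (hle : ε ≤ p.1)
    (o : {i : Fin ℓ // ε i ≠ p.1 i} → Bool) (g : (Fin ℓ → Bool) → (Fin ℓ → ℤ) → ZMod 2)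
    (v : Tot ℓ C) :
    piece ℓ Λ C Φ ε p hle o (fun q => g q.1 q.2 • v q) =
      g ε (p.2 - shiftV ℓ Λ o) • piece ℓ Λ C Φ ε p hle o v := by
  simp [piece]

/-- Let `Λ` be a symmetric `ℓ×ℓ` framing matrix and let
`(C_ε(s), Φ^{ε,ε',o})` be a link-surgery-type hypercube of `𝔽₂`-vector spaces, with
total complex `C = ∏_{ε,s} C_ε(s)` and total differential `D`.  If `a ∈ ℤ^ℓ` satisfies
`N·a = Λx` for some `N ≥ 1` and `x ∈ ℤ^ℓ` (i.e. `a` is torsion in `ℤ^ℓ/im Λ`), then the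
action `𝔄_a = Σᵢ aᵢ F^{K_i}` is null-homotopic via a grading-preserving homotopy `H`:
`𝔄_a = D∘H + H∘D`. -/
theorem statement_0 (hℓ : 1 ≤ ℓ) (hΛ : Λ.IsSymm)
    (Φ : ∀ ε ε' : Fin ℓ → Bool, ε ≤ ε' → ∀ (o : {i : Fin ℓ // ε i ≠ ε' i} → Bool)
      (s : Fin ℓ → ℤ), C ε s →ₗ[ZMod 2] C ε' (s + shiftV ℓ Λ o))
    (a : Fin ℓ → ℤ) (N : ℕ) (hN : 0 < N) (x : Fin ℓ → ℤ)
    (hNa : (N : ℤ) • a = Λ.mulVec x) :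
    ∃ Hc : ∀ (ε : Fin ℓ → Bool) (s : Fin ℓ → ℤ), C ε s →ₗ[ZMod 2] C ε s,
      Atot ℓ Λ C Φ a =
        Dtot ℓ Λ C Φ ∘ₗ (LinearMap.pi fun p => (Hc p.1 p.2) ∘ₗ (LinearMap.proj p)) +
          (LinearMap.pi fun p => (Hc p.1 p.2) ∘ₗ (LinearMap.proj p)) ∘ₗ
            Dtot ℓ Λ C Φ := by
  refine ⟨fun ε s => gfun ℓ a x N ε s • LinearMap.id, ?_⟩
  refine LinearMap.ext fun v => funext fun p => ?_
  have hH : (LinearMap.pi fun p : (Fin ℓ → Bool) × (Fin ℓ → ℤ) =>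
      (gfun ℓ a x N p.1 p.2 • (LinearMap.id : C p.1 p.2 →ₗ[ZMod 2] C p.1 p.2)) ∘ₗ
        (LinearMap.proj p)) v = fun q => gfun ℓ a x N q.1 q.2 • v q := rfl
  have hR : ∀ w : Tot ℓ C, Dtot ℓ Λ C Φ w p = ∑ ε : Fin ℓ → Bool,
      if hle : ε ≤ p.1 then
        ∑ o : {i : Fin ℓ // ε i ≠ p.1 i} → Bool, piece ℓ Λ C Φ ε p hle o w
      else 0 := by
    intro w
    simp only [Dtot, LinearMap.pi_apply, LinearMap.sum_apply]
    refine Finset.sum_congr rfl fun ε _ => ?_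
    split_ifs <;> simp [LinearMap.sum_apply]
  have hF : ∀ i, Fpos ℓ Λ C Φ i v p = ∑ ε : Fin ℓ → Bool,
      if hle : ε ≤ p.1 then
        ∑ o : {i : Fin ℓ // ε i ≠ p.1 i} → Bool,
          (if hd : ε i ≠ p.1 i then (if o ⟨i, hd⟩ then (1 : ZMod 2) else 0) else 0) •
            piece ℓ Λ C Φ ε p hle o v
      else 0 := by
    intro i
    simp only [Fpos, LinearMap.pi_apply, LinearMap.sum_apply]
    refine Finset.sum_congr rfl fun ε _ => ?_
    split_ifs with h1 h2
    · rw [LinearMap.sum_apply]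
      refine Finset.sum_congr rfl fun o _ => ?_
      split_ifs <;> simp
    · simp
    · simp
  have hA : Atot ℓ Λ C Φ a v p = ∑ i, (a i : ZMod 2) • Fpos ℓ Λ C Φ i v p := by
    simp [Atot, LinearMap.sum_apply, Finset.sum_apply]
  have hE : ∀ w : Tot ℓ C, (LinearMap.pi fun p : (Fin ℓ → Bool) × (Fin ℓ → ℤ) =>
      (gfun ℓ a x N p.1 p.2 • (LinearMap.id : C p.1 p.2 →ₗ[ZMod 2] C p.1 p.2)) ∘ₗ
        (LinearMap.proj p)) w p = gfun ℓ a x N p.1 p.2 • w p := fun _ => rfl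
  rw [LinearMap.add_apply, LinearMap.comp_apply, LinearMap.comp_apply, Pi.add_apply, hH, hE,
    hR, hR, hA]
  simp only [hF]
  simp only [Finset.smul_sum]
  rw [Finset.sum_comm, ← Finset.sum_add_distrib]
  refine Finset.sum_congr rfl fun ε _ => ?_
  by_cases hle : ε ≤ p.1
  · simp only [dif_pos hle, Finset.smul_sum]
    rw [Finset.sum_comm, ← Finset.sum_add_distrib]
    refine Finset.sum_congr rfl fun o _ => ?_
    rw [piece_smul, ← add_smul, ← key ℓ Λ hΛ a N hN x hNa hle o p.2, Finset.sum_smul]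
    refine Finset.sum_congr rfl fun i _ => ?_
    rw [smul_smul]
    congr 1
    split_ifs <;> simp
  · simp [dif_neg hle]

end LinkSurgeryHomologyAction
end

section
/- Let Λ be a symmetric ℓ×ℓ integer matrix and let a = (a₁,…,a_ℓ) ∈ ℤ^ℓ. Suppose there exist a positive integer N and x ∈ ℤ^ℓ such that N·a = Λx. Then there exists a function η : ℤ^ℓ → ℤ such that η(s + Λe_i) = η(s) − a_i for all s ∈ ℤ^ℓ and all 1 ≤ i ≤ ℓ, where e_i denotes the i-th standard basis vector (so Λe_i is the i-th column of Λ). -/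
/-- Let `Λ` be a symmetric `ℓ×ℓ` integer matrix and `a ∈ ℤ^ℓ`.
If `N • a = Λ x` for some positive integer `N` and some `x ∈ ℤ^ℓ`, then there is a
function `η : ℤ^ℓ → ℤ` with `η (s + Λ eᵢ) = η s - aᵢ` for all `s` and `i`, where
`Λ eᵢ = (fun j => Λ j i)` is the `i`-th column of `Λ`. -/
theorem statement_1 (ℓ : ℕ) (Λ : Matrix (Fin ℓ) (Fin ℓ) ℤ) (hΛ : Λ.IsSymm)
    (a : Fin ℓ → ℤ) (N : ℕ) (hN : 0 < N) (x : Fin ℓ → ℤ)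
    (hNa : (N : ℤ) • a = Λ.mulVec x) :
    ∃ η : (Fin ℓ → ℤ) → ℤ,
      ∀ (s : Fin ℓ → ℤ) (i : Fin ℓ),
        η (s + fun j => Λ j i) = η s - a i := by
  refine ⟨fun s => -((x ⬝ᵥ s) / (N : ℤ)), fun s i => ?_⟩
  have h : x ⬝ᵥ (fun j => Λ j i) = (N : ℤ) * a i := by
    have h1 := congrFun hNa i
    simp only [Pi.smul_apply, smul_eq_mul, Matrix.mulVec] at h1
    rw [h1, dotProduct_comm]
    congr 1
    funext j
    exact hΛ.apply i j
  have hN' : (N : ℤ) ≠ 0 := by exact_mod_cast hN.ne'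
  simp only [dotProduct_add, h]
  rw [Int.add_mul_ediv_left _ _ hN']
  ring
end

section
/- Let Λ be a symmetric ℓ×ℓ integer matrix and let a = (a₁,…,a_ℓ) ∈ ℤ^ℓ. Suppose there exist a positive integer N and x ∈ ℤ^ℓ such that N·a = Λx. Then there exists a function ω : ℤ^ℓ × {0,1}^ℓ → ℤ such that for all s ∈ ℤ^ℓ, all ε ∈ {0,1}^ℓ and all i with ε_i = 0: (1) ω(s, ε + e_i) = a_i + ω(s, ε), and (2) ω(s + Λe_i, ε + e_i) = ω(s, ε), where e_i is the i-th standard basis vector and Λe_i is the i-th column of Λ. -/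
/-- Let `Λ` be a symmetric `ℓ×ℓ` integer matrix and `a ∈ ℤ^ℓ` with
`N • a = Λ x` for some `N ≥ 1` and `x ∈ ℤ^ℓ`.  Then there is a function
`ω : ℤ^ℓ × {0,1}^ℓ → ℤ` such that for all `s`, all `ε` and all `i` with `ε i = 0`:
`ω (s, ε + eᵢ) = aᵢ + ω (s, ε)` and `ω (s + Λeᵢ, ε + eᵢ) = ω (s, ε)`. -/
theorem statement_2 (ℓ : ℕ) (Λ : Matrix (Fin ℓ) (Fin ℓ) ℤ) (hΛ : Λ.IsSymm)
    (a : Fin ℓ → ℤ) (N : ℕ) (hN : 0 < N) (x : Fin ℓ → ℤ)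
    (hNa : (N : ℤ) • a = Λ.mulVec x) :
    ∃ ω : (Fin ℓ → ℤ) → (Fin ℓ → Bool) → ℤ,
      ∀ (s : Fin ℓ → ℤ) (ε : Fin ℓ → Bool) (i : Fin ℓ), ε i = false →
        (ω s (Function.update ε i true) = a i + ω s ε ∧
          ω (s + fun j => Λ j i) (Function.update ε i true) = ω s ε) := by
  refine ⟨fun s ε => (∑ j, if ε j = true then a j else 0) - (∑ j, x j * s j) / (N : ℤ), ?_⟩
  intro s ε i hi
  have h1 : (∑ j, if Function.update ε i true j = true then a j else 0)
      = a i + ∑ j, if ε j = true then a j else 0 := by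
    have h : ∀ j, (if Function.update ε i true j = true then a j else 0)
        = (if j = i then a j else 0) + (if ε j = true then a j else 0) := by
      intro j
      by_cases hj : j = i
      · subst hj
        simp [hi]
      · simp [hj]
    simp only [h, Finset.sum_add_distrib]
    simp
  have hN' : (N : ℤ) ≠ 0 := by exact_mod_cast hN.ne'
  have h2 : (∑ j, x j * (s + fun j => Λ j i) j) = (∑ j, x j * s j) + a i * (N : ℤ) := by
    have h3 := congrFun hNa i
    simp only [Pi.smul_apply, smul_eq_mul, Matrix.mulVec, dotProduct] at h3
    rw [mul_comm (a i), h3, ← Finset.sum_add_distrib]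
    refine Finset.sum_congr rfl fun j _ => ?_
    rw [Pi.add_apply, ← hΛ.apply i j]
    ring
  refine ⟨?_, ?_⟩
  · simp only [h1]
    ring
  · simp only [h1, h2, Int.add_mul_ediv_right _ _ hN']
    ring
end

section
/- Let ℓ = ℓ₀ + ℓ₁ with ℓ₀, ℓ₁ ≥ 1, let Λ be a symmetric ℓ×ℓ integer matrix, and let Λ₀ denote its top-left ℓ₀×ℓ₀ block. Let a = (a₁,…,a_{ℓ₀}) ∈ ℤ^{ℓ₀} and suppose there exist a positive integer N and x ∈ ℤ^{ℓ₀} such that N·a = Λ₀x. Then there exists a function ω : ℤ^ℓ × {0,1}^{ℓ₀} → ℤ such that: (1) ω(s, ε + e_i) = a_i + ω(s, ε) for all s, all ε with ε_i = 0, and all 1 ≤ i ≤ ℓ₀; (2) ω(s + Λe_i, ε + e_i) = ω(s, ε) for all such s, ε, i, where Λe_i is the full i-th column of Λ in ℤ^ℓ; and (3) ω(s ± e_j, ε) = ω(s, ε) for all s, ε and all ℓ₀ < j ≤ ℓ. -/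
/-- Let `ℓ = ℓ₀ + ℓ₁` with `ℓ₀, ℓ₁ ≥ 1`, let `Λ` be a symmetric `ℓ×ℓ`
integer matrix with top-left `ℓ₀×ℓ₀` block `Λ₀`.  Let `a ∈ ℤ^{ℓ₀}` with `N • a = Λ₀ x`
for some `N ≥ 1`, `x ∈ ℤ^{ℓ₀}`.  Then there is `ω : ℤ^ℓ × {0,1}^{ℓ₀} → ℤ` with
(1) `ω (s, ε + eᵢ) = aᵢ + ω (s, ε)` whenever `ε i = 0` (for `i ≤ ℓ₀`);
(2) `ω (s + Λeᵢ, ε + eᵢ) = ω (s, ε)` for such `s, ε, i`, where `Λeᵢ` is the full `i`-th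
column of `Λ`; and (3) `ω (s ± e_j, ε) = ω (s, ε)` for all `s, ε` and all `ℓ₀ < j ≤ ℓ`. -/
theorem statement_3 (ℓ₀ ℓ₁ : ℕ) (h₀ : 1 ≤ ℓ₀) (h₁ : 1 ≤ ℓ₁)
    (Λ : Matrix (Fin (ℓ₀ + ℓ₁)) (Fin (ℓ₀ + ℓ₁)) ℤ) (hΛ : Λ.IsSymm)
    (a : Fin ℓ₀ → ℤ) (N : ℕ) (hN : 0 < N) (x : Fin ℓ₀ → ℤ)
    (hNa : (N : ℤ) • a =
      (Matrix.of fun i j : Fin ℓ₀ => Λ (Fin.castAdd ℓ₁ i) (Fin.castAdd ℓ₁ j)).mulVec x) :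
    ∃ ω : (Fin (ℓ₀ + ℓ₁) → ℤ) → (Fin ℓ₀ → Bool) → ℤ,
      (∀ (s : Fin (ℓ₀ + ℓ₁) → ℤ) (ε : Fin ℓ₀ → Bool) (i : Fin ℓ₀), ε i = false →
        ω s (Function.update ε i true) = a i + ω s ε) ∧
      (∀ (s : Fin (ℓ₀ + ℓ₁) → ℤ) (ε : Fin ℓ₀ → Bool) (i : Fin ℓ₀), ε i = false →
        ω (s + fun j => Λ j (Fin.castAdd ℓ₁ i)) (Function.update ε i true) = ω s ε) ∧
      (∀ (s : Fin (ℓ₀ + ℓ₁) → ℤ) (ε : Fin ℓ₀ → Bool) (j : Fin ℓ₁),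
        ω (s + Pi.single (Fin.natAdd ℓ₀ j) 1) ε = ω s ε ∧
        ω (s - Pi.single (Fin.natAdd ℓ₀ j) 1) ε = ω s ε) := by
  have hN' : (N : ℤ) ≠ 0 := by exact_mod_cast hN.ne'
  have key : ∀ (ε : Fin ℓ₀ → Bool) (i : Fin ℓ₀), ε i = false →
      (∑ k, if Function.update ε i true k = true then a k else 0)
        = a i + ∑ k, if ε k = true then a k else 0 := by
    intro ε i hi
    rw [← Finset.add_sum_erase _ _ (Finset.mem_univ i),
      ← Finset.add_sum_erase _ (fun k => if ε k = true then a k else 0) (Finset.mem_univ i)]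
    simp only [Function.update_self, hi, if_true]
    have : ∀ k ∈ Finset.univ.erase i, (if Function.update ε i true k = true then a k else 0)
        = if ε k = true then a k else 0 := by
      intro k hk
      rw [Function.update_of_ne (Finset.ne_of_mem_erase hk)]
    rw [Finset.sum_congr rfl this]
    simp
  have hdot : ∀ i : Fin ℓ₀, ∑ k, x k * Λ (Fin.castAdd ℓ₁ k) (Fin.castAdd ℓ₁ i) = N * a i := by
    intro i
    have h := congrFun hNa i
    simp only [Pi.smul_apply, smul_eq_mul, Matrix.mulVec, dotProduct, Matrix.of_apply] at h
    rw [h]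
    refine Finset.sum_congr rfl fun k _ => ?_
    rw [hΛ.apply, mul_comm]
  have hne : ∀ (k : Fin ℓ₀) (j : Fin ℓ₁), Fin.castAdd ℓ₁ k ≠ Fin.natAdd ℓ₀ j := by
    intro k j h
    have := congrArg Fin.val h
    simp at this
    omega
  refine ⟨fun s ε => (∑ k, if ε k = true then a k else 0)
    - (∑ k, x k * s (Fin.castAdd ℓ₁ k)) / (N : ℤ), ?_, ?_, ?_⟩
  · intro s ε i hi
    simp only [key ε i hi]
    ring
  · intro s ε i hi
    simp only [key ε i hi, Pi.add_apply, mul_add, Finset.sum_add_distrib, hdot]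
    rw [Int.add_mul_ediv_left _ _ hN']
    ring
  · intro s ε j
    simp [Pi.single_apply, hne]
end

section
/- Let 𝒞 = (C_ε, D_{ε,ε′}) be an n-dimensional hypercube of chain complexes over 𝔽₂. Suppose that for each ε ∈ {0,1}ⁿ we are given a chain complex (Z_ε, δ_ε) and 𝔽₂-linear maps π_ε : C_ε → Z_ε, i_ε : Z_ε → C_ε and h_ε : C_ε → C_ε such that π_ε and i_ε are chain maps (with respect to the internal differentials D_{ε,ε} and δ_ε) and π_ε∘i_ε = id, i_ε∘π_ε = id + D_{ε,ε}∘h_ε + h_ε∘D_{ε,ε}, h_ε∘h_ε = 0, π_ε∘h_ε = 0 and h_ε∘i_ε = 0. Define δ_{ε,ε} = δ_ε and, for ε < ε′, δ_{ε,ε′} = Σ π_{ε′} ∘ D_{ε_{j−1},ε_j} ∘ h_{ε_{j−1}} ∘ D_{ε_{j−2},ε_{j−1}} ∘ ⋯ ∘ h_{ε₂} ∘ D_{ε₁,ε₂} ∘ i_ε, the sum over all strictly increasing sequences ε = ε₁ < ε₂ < ⋯ < ε_j = ε′. Then 𝒵 = (Z_ε, δ_{ε,ε′}) is an n-dimensional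 hypercube of chain complexes. -/
open scoped Classical

namespace HypercubeHPL

variable (n : ℕ)

/-- Transport of an element along an equality of cube vertices. -/
def castL (A : (Fin n → Bool) → Type) [∀ ε, AddCommGroup (A ε)]
    [∀ ε, Module (ZMod 2) (A ε)] {ε ε' : Fin n → Bool} (h : ε = ε') :
    A ε →ₗ[ZMod 2] A ε' := by subst h; exact LinearMap.id

/-- The sum, over all strictly increasing sequences `ε = ε₁ < ε₂ < ⋯ < ε_j = ε'`
(of length `j ≤ k + 2`), of the composites
`D_{ε_{j−1},ε_j} ∘ h_{ε_{j−1}} ∘ ⋯ ∘ h_{ε₂} ∘ D_{ε₁,ε₂}`.  Since strictly increasing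
sequences in `{0,1}ⁿ` have at most `n+1` terms, taking `k = n` gives the full sum. -/
noncomputable def seqSum (C : (Fin n → Bool) → Type) [∀ ε, AddCommGroup (C ε)]
    [∀ ε, Module (ZMod 2) (C ε)]
    (D : ∀ ε ε' : Fin n → Bool, ε ≤ ε' → (C ε →ₗ[ZMod 2] C ε'))
    (hmt : ∀ ε, C ε →ₗ[ZMod 2] C ε) :
    ℕ → ∀ ε ε' : Fin n → Bool, ε ≤ ε' → (C ε →ₗ[ZMod 2] C ε')
  | 0, ε, ε', hle => D ε ε' hle
  | (k + 1), ε, ε', hle => D ε ε' hle +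
      ∑ ε'' : Fin n → Bool,
        if h2 : ε < ε'' ∧ ε'' < ε' then
          (D ε'' ε' h2.2.le) ∘ₗ (hmt ε'') ∘ₗ (seqSum C D hmt k ε ε'' h2.1.le)
        else 0

/-- The transferred hypercube structure maps: the internal differential `δ_ε` on the
diagonal, and `δ_{ε,ε'} = Σ π_{ε'} ∘ D ∘ h ∘ ⋯ ∘ h ∘ D ∘ i_ε` (sum over all strictly
increasing sequences from `ε` to `ε'`) when `ε < ε'`. -/
noncomputable def trans (C : (Fin n → Bool) → Type) [∀ ε, AddCommGroup (C ε)]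
    [∀ ε, Module (ZMod 2) (C ε)]
    (D : ∀ ε ε' : Fin n → Bool, ε ≤ ε' → (C ε →ₗ[ZMod 2] C ε'))
    (hmt : ∀ ε, C ε →ₗ[ZMod 2] C ε)
    (Z : (Fin n → Bool) → Type) [∀ ε, AddCommGroup (Z ε)] [∀ ε, Module (ZMod 2) (Z ε)]
    (δZ : ∀ ε, Z ε →ₗ[ZMod 2] Z ε)
    (π : ∀ ε, C ε →ₗ[ZMod 2] Z ε) (inc : ∀ ε, Z ε →ₗ[ZMod 2] C ε)
    (ε ε' : Fin n → Bool) (hle : ε ≤ ε') : Z ε →ₗ[ZMod 2] Z ε' :=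
  if heq : ε = ε' then (castL n Z heq) ∘ₗ (δZ ε)
  else (π ε') ∘ₗ (seqSum n C D hmt n ε ε' hle) ∘ₗ (inc ε)

section helpers

variable {n}
variable {A : (Fin n → Bool) → Type} [∀ ε, AddCommGroup (A ε)] [∀ ε, Module (ZMod 2) (A ε)]
variable {B : (Fin n → Bool) → Type} [∀ ε, AddCommGroup (B ε)] [∀ ε, Module (ZMod 2) (B ε)]
variable {E : (Fin n → Bool) → Type} [∀ ε, AddCommGroup (E ε)] [∀ ε, Module (ZMod 2) (E ε)]

noncomputable def tot (M : ∀ ε ε', A ε →ₗ[ZMod 2] B ε') :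
    (∀ ε, A ε) →ₗ[ZMod 2] (∀ ε, B ε) :=
  LinearMap.pi fun ε' => ∑ ε, M ε ε' ∘ₗ LinearMap.proj ε

noncomputable def diag (f : ∀ ε, A ε →ₗ[ZMod 2] B ε) :
    (∀ ε, A ε) →ₗ[ZMod 2] (∀ ε, B ε) :=
  LinearMap.pi fun ε => f ε ∘ₗ LinearMap.proj ε

noncomputable def ofLe (M : ∀ ε ε' : Fin n → Bool, ε ≤ ε' → (A ε →ₗ[ZMod 2] B ε'))
    (ε ε' : Fin n → Bool) : A ε →ₗ[ZMod 2] B ε' := if h : ε ≤ ε' then M ε ε' h else 0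

noncomputable def ofLt (M : ∀ ε ε' : Fin n → Bool, ε ≤ ε' → (A ε →ₗ[ZMod 2] B ε'))
    (ε ε' : Fin n → Bool) : A ε →ₗ[ZMod 2] B ε' := if h : ε < ε' then M ε ε' h.le else 0

lemma tot_apply (M : ∀ ε ε', A ε →ₗ[ZMod 2] B ε') (x : ∀ ε, A ε) (ε' : Fin n → Bool) :
    tot M x ε' = ∑ ε, M ε ε' (x ε) := by
  simp [tot]

lemma diag_apply (f : ∀ ε, A ε →ₗ[ZMod 2] B ε) (x : ∀ ε, A ε) (ε : Fin n → Bool) :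
    diag f x ε = f ε (x ε) := by
  simp [diag]

lemma tot_comp (N : ∀ ε ε', B ε →ₗ[ZMod 2] E ε') (M : ∀ ε ε', A ε →ₗ[ZMod 2] B ε') :
    tot N ∘ₗ tot M = tot (fun ε ε'' => ∑ ε', N ε' ε'' ∘ₗ M ε ε') := by
  refine LinearMap.ext fun x => ?_; funext ε''
  simp only [LinearMap.comp_apply, tot_apply, map_sum, LinearMap.sum_apply]
  exact Finset.sum_comm

lemma diag_comp_tot (f : ∀ ε, B ε →ₗ[ZMod 2] E ε) (M : ∀ ε ε', A ε →ₗ[ZMod 2] B ε') :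
    diag f ∘ₗ tot M = tot (fun ε ε' => f ε' ∘ₗ M ε ε') := by
  refine LinearMap.ext fun x => ?_; funext ε''
  simp only [LinearMap.comp_apply, tot_apply, diag_apply, map_sum]

lemma tot_comp_diag (M : ∀ ε ε', B ε →ₗ[ZMod 2] E ε') (f : ∀ ε, A ε →ₗ[ZMod 2] B ε) :
    tot M ∘ₗ diag f = tot (fun ε ε' => M ε ε' ∘ₗ f ε) := by
  refine LinearMap.ext fun x => ?_; funext ε''
  simp only [LinearMap.comp_apply, tot_apply, diag_apply]

lemma diag_comp_diag (g : ∀ ε, B ε →ₗ[ZMod 2] E ε) (f : ∀ ε, A ε →ₗ[ZMod 2] B ε) :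
    diag g ∘ₗ diag f = diag (fun ε => g ε ∘ₗ f ε) := by
  refine LinearMap.ext fun x => ?_; funext ε''
  simp only [LinearMap.comp_apply, diag_apply]

lemma tot_add (M N : ∀ ε ε', A ε →ₗ[ZMod 2] B ε') :
    tot M + tot N = tot (fun ε ε' => M ε ε' + N ε ε') := by
  refine LinearMap.ext fun x => ?_; funext ε''
  simp [tot_apply, Finset.sum_add_distrib]

lemma tot_zero_iff (M : ∀ ε ε', A ε →ₗ[ZMod 2] B ε') : tot M = 0 ↔ ∀ ε ε', M ε ε' = 0 := by
  constructor
  · intro h ε ε'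
    ext x
    have := congrFun (LinearMap.congr_fun h (Pi.single ε x)) ε'
    rw [tot_apply, Finset.sum_eq_single ε] at this
    · simpa using this
    · intro b _ hb
      simp [Pi.single_eq_of_ne hb]
    · simp
  · intro h
    refine LinearMap.ext fun x => ?_; funext ε
    simp [tot_apply, h]

lemma tot_ofLe (M : ∀ ε ε' : Fin n → Bool, ε ≤ ε' → (A ε →ₗ[ZMod 2] B ε')) :
    tot (ofLe M) = diag (fun ε => M ε ε le_rfl) + tot (ofLt M) := by
  refine LinearMap.ext fun x => ?_; funext ε'
  simp only [LinearMap.add_apply, Pi.add_apply, tot_apply, diag_apply]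
  rw [← Finset.add_sum_erase _ _ (Finset.mem_univ ε'),
    ← Finset.add_sum_erase _ (fun ε => ofLt M ε ε' (x ε)) (Finset.mem_univ ε')]
  simp only [ofLe, ofLt, le_refl, lt_irrefl, dite_true, dite_false, LinearMap.zero_apply, zero_add]
  congr 1
  apply Finset.sum_congr rfl
  intro ε hε
  have hne := Finset.ne_of_mem_erase hε
  by_cases h : ε ≤ ε'
  · have h' : ε < ε' := lt_of_le_of_ne h hne
    rw [dif_pos h, dif_pos h']
  · have h' : ¬ ε < ε' := fun h' => h h'.le
    rw [dif_neg h, dif_neg h']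

lemma ofLe_sq (M : ∀ ε ε' : Fin n → Bool, ε ≤ ε' → (A ε →ₗ[ZMod 2] A ε')) :
    tot (ofLe M) ∘ₗ tot (ofLe M) = 0 ↔ ∀ ε ε'' : Fin n → Bool, ε ≤ ε'' →
      (∑ ε' : Fin n → Bool,
        if h2 : ε ≤ ε' ∧ ε' ≤ ε'' then (M ε' ε'' h2.2) ∘ₗ (M ε ε' h2.1) else 0) = 0 := by
  have key : ∀ ε ε' ε'' : Fin n → Bool, ofLe M ε' ε'' ∘ₗ ofLe M ε ε' =
      if h2 : ε ≤ ε' ∧ ε' ≤ ε'' then (M ε' ε'' h2.2) ∘ₗ (M ε ε' h2.1) else 0 := by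
    intro ε ε' ε''
    unfold ofLe
    by_cases h1 : ε ≤ ε' <;> by_cases h2 : ε' ≤ ε'' <;> simp [h1, h2]
  rw [tot_comp, tot_zero_iff]
  simp only [key]
  constructor
  · intro h ε ε'' _
    exact h ε ε''
  · intro h ε ε''
    by_cases hle : ε ≤ ε''
    · exact h ε ε'' hle
    · apply Finset.sum_eq_zero
      intro ε' _
      rw [dif_neg]
      exact fun h => hle (h.1.trans h.2)

lemma exists_weight : ∃ w : (Fin n → Bool) → ℕ, StrictMono w ∧ ∀ ε, w ε ≤ n := by
  refine ⟨fun ε => (Finset.univ.filter (fun i => ε i = true)).card, ?_, ?_⟩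
  · intro a b hab
    apply Finset.card_lt_card
    obtain ⟨hle, i, hi⟩ := Pi.lt_def.1 hab
    rw [Finset.ssubset_iff_of_subset]
    · refine ⟨i, ?_, ?_⟩
      · simp only [Finset.mem_filter, Finset.mem_univ, true_and]
        revert hi; cases a i <;> cases b i <;> simp
      · simp only [Finset.mem_filter, Finset.mem_univ, true_and]
        revert hi; cases a i <;> cases b i <;> simp
    · intro j
      have := hle j
      simp only [Finset.mem_filter, Finset.mem_univ, true_and]
      revert this; cases a j <;> cases b j <;> simp
  · intro ε
    exact (Finset.card_le_univ _).trans (by simp)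

lemma seqSum_stable (D : ∀ ε ε' : Fin n → Bool, ε ≤ ε' → (A ε →ₗ[ZMod 2] A ε'))
    (hmt : ∀ ε, A ε →ₗ[ZMod 2] A ε) (w : (Fin n → Bool) → ℕ) (hw : StrictMono w) (k : ℕ) :
    ∀ (ε ε' : Fin n → Bool) (h : ε ≤ ε'), w ε' ≤ w ε + k + 1 →
      seqSum n A D hmt (k+1) ε ε' h = seqSum n A D hmt k ε ε' h := by
  induction k with
  | zero =>
    intro ε ε' h hk
    rw [seqSum, seqSum]
    rw [Finset.sum_eq_zero, add_zero]
    intro ε'' _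
    rw [dif_neg]
    rintro ⟨h1, h2⟩
    have := hw h1
    have := hw h2
    omega
  | succ k ih =>
    intro ε ε' h hk
    rw [seqSum, seqSum]
    congr 1
    apply Finset.sum_congr rfl
    intro ε'' _
    by_cases h2 : ε < ε'' ∧ ε'' < ε'
    · rw [dif_pos h2, dif_pos h2, ih]
      have := hw h2.2
      omega
    · rw [dif_neg h2, dif_neg h2]

lemma tot_seq_succ (D : ∀ ε ε' : Fin n → Bool, ε ≤ ε' → (A ε →ₗ[ZMod 2] A ε'))
    (hmt : ∀ ε, A ε →ₗ[ZMod 2] A ε) (k : ℕ) :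
    tot (ofLt (seqSum n A D hmt (k+1))) = tot (ofLt D) +
      tot (ofLt D) ∘ₗ diag hmt ∘ₗ tot (ofLt (seqSum n A D hmt k)) := by
  rw [diag_comp_tot, tot_comp, tot_add]
  congr 1
  funext ε ε'
  by_cases h : ε < ε'
  · rw [ofLt, dif_pos h, seqSum, ofLt, dif_pos h]
    congr 1
    apply Finset.sum_congr rfl
    intro ε'' _
    unfold ofLt
    by_cases h1 : ε < ε'' <;> by_cases h2 : ε'' < ε' <;> simp [h1, h2]
  · rw [ofLt, dif_neg h, ofLt, dif_neg h, zero_add, Finset.sum_eq_zero]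
    intro ε'' _
    unfold ofLt
    by_cases h1 : ε < ε'' <;> by_cases h2 : ε'' < ε' <;> simp [h1, h2]
    exact absurd (h1.trans h2) h

lemma ring_key {R : Type*} [Ring R] (h2 : ∀ x : R, x + x = 0) (d P H S : R)
    (hP : d * P + P * d + P * P = 0) (h1 : S = P + P * H * S) (h3 : S = P + S * H * P) :
    d * S + S * d + S * (1 + d * H + H * d) * S = 0 := by
  have e1 : S = P * (1 + H * S) := by rw [mul_add, mul_one, ← mul_assoc]; exact h1
  have e3 : S = (1 + S * H) * P := by rw [add_mul, one_mul]; exact h3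
  have : d * S + S * d + S * (1 + d * H + H * d) * S =
      (1 + S * H) * d * S + S * d * (1 + H * S) + S * S := by noncomm_ring
  rw [this]
  have : (1 + S * H) * d * S + S * d * (1 + H * S) + S * S = 
     (1 + S * H) * d * (P * (1 + H * S)) + ((1 + S * H) * P) * d * (1 + H * S)
      + ((1 + S * H) * P) * (P * (1 + H * S)) := by rw [← e1, ← e3]
  rw [this]
  have : (1 + S * H) * d * (P * (1 + H * S)) + ((1 + S * H) * P) * d * (1 + H * S)
      + ((1 + S * H) * P) * (P * (1 + H * S)) =
      (1 + S * H) * (d * P + P * d + P * P) * (1 + H * S) := by noncomm_ring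
  rw [this, hP]; simp

lemma final_key {X Y : Type*} [AddCommGroup X] [Module (ZMod 2) X] [AddCommGroup Y]
    [Module (ZMod 2) Y] (d P H S : Module.End (ZMod 2) X) (q : X →ₗ[ZMod 2] Y)
    (i : Y →ₗ[ZMod 2] X) (δ : Y →ₗ[ZMod 2] Y)
    (hδ : δ ∘ₗ δ = 0) (hq : δ ∘ₗ q = q ∘ₗ d) (hi : d ∘ₗ i = i ∘ₗ δ)
    (hiq : i ∘ₗ q = LinearMap.id + d ∘ₗ H + H ∘ₗ d)
    (hdd : d ∘ₗ d = 0) (hP : (d + P) ∘ₗ (d + P) = 0)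
    (h1 : S = P + P * H * S) (h3 : S = P + S * H * P) :
    (δ + q ∘ₗ S ∘ₗ i) ∘ₗ (δ + q ∘ₗ S ∘ₗ i) = 0 := by
  have hP' : d * P + P * d + P * P = 0 := by
    have e : (d + P) * (d + P) = 0 := hP
    have e' : d * d = 0 := hdd
    have : d * P + P * d + P * P = (d + P) * (d + P) - d * d := by noncomm_ring
    rw [this, e, e', sub_zero]
  have key := ring_key (fun x => ZModModule.add_self x) d P H S hP' h1 h3
  have hiq' : ∀ x, i (q x) = x + d (H x) + H (d x) := fun x => LinearMap.congr_fun hiq x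
  have hq' : ∀ x, δ (q x) = q (d x) := fun x => LinearMap.congr_fun hq x
  have hi' : ∀ x, d (i x) = i (δ x) := fun x => LinearMap.congr_fun hi x
  have hδ' : ∀ x, δ (δ x) = 0 := fun x => LinearMap.congr_fun hδ x
  ext y
  have := congrArg q (LinearMap.congr_fun key (i y))
  simp only [LinearMap.add_apply, Module.End.mul_apply, Module.End.one_apply, map_add, hi',
    LinearMap.zero_apply, map_zero] at this
  simp only [LinearMap.add_apply, LinearMap.comp_apply, map_add, hδ', hq', hiq',
    LinearMap.zero_apply]
  refine Eq.trans ?_ this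
  abel

end helpers

/-- homological perturbation lemma for hypercubes, structure maps.
Given an `n`-dimensional hypercube of chain complexes `(C_ε, D_{ε,ε'})` over `𝔽₂` and a
strong deformation retraction onto complexes `(Z_ε, δ_ε)` at each vertex, the
transferred maps `δ_{ε,ε'}` form an `n`-dimensional hypercube of chain complexes. -/
theorem statement_7
    (C : (Fin n → Bool) → Type) [∀ ε, AddCommGroup (C ε)] [∀ ε, Module (ZMod 2) (C ε)]
    (D : ∀ ε ε' : Fin n → Bool, ε ≤ ε' → (C ε →ₗ[ZMod 2] C ε'))
    (hD : ∀ ε ε'' : Fin n → Bool, ε ≤ ε'' →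
      (∑ ε' : Fin n → Bool,
        if h2 : ε ≤ ε' ∧ ε' ≤ ε'' then (D ε' ε'' h2.2) ∘ₗ (D ε ε' h2.1) else 0) = 0)
    (Z : (Fin n → Bool) → Type) [∀ ε, AddCommGroup (Z ε)] [∀ ε, Module (ZMod 2) (Z ε)]
    (δZ : ∀ ε, Z ε →ₗ[ZMod 2] Z ε) (hδZ : ∀ ε, δZ ε ∘ₗ δZ ε = 0)
    (π : ∀ ε, C ε →ₗ[ZMod 2] Z ε) (inc : ∀ ε, Z ε →ₗ[ZMod 2] C ε)
    (hmt : ∀ ε, C ε →ₗ[ZMod 2] C ε)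
    (hπchain : ∀ ε, δZ ε ∘ₗ π ε = π ε ∘ₗ D ε ε le_rfl)
    (hincchain : ∀ ε, D ε ε le_rfl ∘ₗ inc ε = inc ε ∘ₗ δZ ε)
    (hπinc : ∀ ε, π ε ∘ₗ inc ε = LinearMap.id)
    (hincπ : ∀ ε, inc ε ∘ₗ π ε =
      LinearMap.id + D ε ε le_rfl ∘ₗ hmt ε + hmt ε ∘ₗ D ε ε le_rfl)
    (hhh : ∀ ε, hmt ε ∘ₗ hmt ε = 0)
    (hπh : ∀ ε, π ε ∘ₗ hmt ε = 0)
    (hhinc : ∀ ε, hmt ε ∘ₗ inc ε = 0) :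
    ∀ ε ε'' : Fin n → Bool, ∀ _ : ε ≤ ε'',
      (∑ ε' : Fin n → Bool,
        if h2 : ε ≤ ε' ∧ ε' ≤ ε'' then
          (trans n C D hmt Z δZ π inc ε' ε'' h2.2) ∘ₗ
            (trans n C D hmt Z δZ π inc ε ε' h2.1)
        else 0) = 0 := by
  apply (ofLe_sq _).1
  obtain ⟨w, hw, hwn⟩ := exists_weight (n := n)
  have hDD := (ofLe_sq D).2 hD
  rw [tot_ofLe] at hDD
  have hstab : seqSum n C D hmt (n+1) = seqSum n C D hmt n := by
    funext ε ε' h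
    exact seqSum_stable D hmt w hw n ε ε' h (by have := hwn ε'; omega)
  have hA1 : tot (ofLt (seqSum n C D hmt n)) = tot (ofLt D) +
      tot (ofLt D) ∘ₗ diag hmt ∘ₗ tot (ofLt (seqSum n C D hmt n)) := by
    rw [← tot_seq_succ, hstab]
  have hcomm : ∀ k, tot (ofLt (seqSum n C D hmt k)) ∘ₗ diag hmt ∘ₗ tot (ofLt D) =
      tot (ofLt D) ∘ₗ diag hmt ∘ₗ tot (ofLt (seqSum n C D hmt k)) := by
    intro k
    induction k with
    | zero => rfl
    | succ k ih =>
      rw [tot_seq_succ]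
      simp only [LinearMap.add_comp, LinearMap.comp_add, LinearMap.comp_assoc, ih]
  have hA2 : tot (ofLt (seqSum n C D hmt n)) = tot (ofLt D) +
      tot (ofLt (seqSum n C D hmt n)) ∘ₗ diag hmt ∘ₗ tot (ofLt D) := by
    rw [hcomm]; exact hA1
  have hdd0 : ∀ ε, D ε ε le_rfl ∘ₗ D ε ε le_rfl = 0 := by
    intro ε
    have := hD ε ε le_rfl
    rw [Finset.sum_eq_single ε] at this
    · simpa using this
    · intro b _ hb
      rw [dif_neg]
      exact fun h => hb (le_antisymm h.2 h.1)
    · simp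
  have htrans : tot (ofLe (trans n C D hmt Z δZ π inc)) = diag δZ +
      diag π ∘ₗ tot (ofLt (seqSum n C D hmt n)) ∘ₗ diag inc := by
    rw [tot_ofLe, tot_comp_diag, diag_comp_tot]
    congr 1
    · congr 1
      funext ε
      simp only [trans, dite_true]
      rfl
    · congr 1
      funext ε ε'
      by_cases h : ε < ε'
      · simp [ofLt, h, trans, h.ne]
      · simp [ofLt, h]
  rw [htrans]
  apply final_key (diag fun ε => D ε ε le_rfl) (tot (ofLt D)) (diag hmt)
  · rw [diag_comp_diag]; simp only [hδZ]; rfl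
  · simp only [diag_comp_diag, hπchain]
  · simp only [diag_comp_diag, hincchain]
  · simp only [diag_comp_diag, hincπ]; rfl
  · rw [diag_comp_diag]; simp only [hdd0]; rfl
  · exact hDD
  · exact hA1
  · exact hA2

end HypercubeHPL
end

section
/- Let 𝒞 = (C_ε, D_{ε,ε′}) be an n-dimensional hypercube of chain complexes over 𝔽₂, and suppose given chain complexes (Z_ε, δ_ε) and maps π_ε : C_ε → Z_ε, i_ε : Z_ε → C_ε, h_ε : C_ε → C_ε such that π_ε and i_ε are chain maps and π_ε∘i_ε = id, i_ε∘π_ε = id + D_{ε,ε}∘h_ε + h_ε∘D_{ε,ε}, h_ε∘h_ε = 0, π_ε∘h_ε = 0, h_ε∘i_ε = 0. Let 𝒵 = (Z_ε, δ_{ε,ε′}) be the transferred hypercube, with δ_{ε,ε′} = Σ π_{ε′} D_{ε_{j−1},ε_j} h_{ε_{j−1}} ⋯ h_{ε₂} D_{ε₁,ε₂} i_ε summed over strictly increasing sequences ε = ε₁ < ⋯ < ε_j = ε′. Define I_{ε,ε} = i_ε and, for ε < ε′, I_{ε,ε′} = Σ h_{ε_j} D_{ε_{j−1},ε_j} ⋯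 h_{ε₂} D_{ε₁,ε₂} i_ε, and define Π_{ε,ε} = π_ε and, for ε < ε′, Π_{ε,ε′} = Σ π_{ε′} D_{ε_{j−1},ε_j} h_{ε_{j−1}} ⋯ D_{ε₁,ε₂} h_{ε₁}, both summed over strictly increasing sequences from ε to ε′. Then I = (I_{ε,ε′}) is a morphism of hypercubes from 𝒵 to 𝒞, Π = (Π_{ε,ε′}) is a morphism of hypercubes from 𝒞 to 𝒵, Π∘I equals the identity morphism of 𝒵, and there exists a collection of maps H = (H_{ε,ε′} : C_ε → C_{ε′})_{ε ≤ ε′} such that I∘Π equals the identity morphism of 𝒞 plus ∂_Mor(H). -/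
open scoped Classical

namespace HypercubeHPL8

variable (n : ℕ)

/-- Transport of an element along an equality of cube vertices. -/
def castL (A : (Fin n → Bool) → Type) [∀ ε, AddCommGroup (A ε)]
    [∀ ε, Module (ZMod 2) (A ε)] {ε ε' : Fin n → Bool} (h : ε = ε') :
    A ε →ₗ[ZMod 2] A ε' := by subst h; exact LinearMap.id

/-- The sum, over all strictly increasing sequences `ε = ε₁ < ε₂ < ⋯ < ε_j = ε'`
(of length `j ≤ k + 2`), of `D_{ε_{j−1},ε_j} ∘ h_{ε_{j−1}} ∘ ⋯ ∘ h_{ε₂} ∘ D_{ε₁,ε₂}`.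
Taking `k = n` gives the full sum over all strictly increasing sequences. -/
noncomputable def seqSum (C : (Fin n → Bool) → Type) [∀ ε, AddCommGroup (C ε)]
    [∀ ε, Module (ZMod 2) (C ε)]
    (D : ∀ ε ε' : Fin n → Bool, ε ≤ ε' → (C ε →ₗ[ZMod 2] C ε'))
    (hmt : ∀ ε, C ε →ₗ[ZMod 2] C ε) :
    ℕ → ∀ ε ε' : Fin n → Bool, ε ≤ ε' → (C ε →ₗ[ZMod 2] C ε')
  | 0, ε, ε', hle => D ε ε' hle
  | (k + 1), ε, ε', hle => D ε ε' hle +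
      ∑ ε'' : Fin n → Bool,
        if h2 : ε < ε'' ∧ ε'' < ε' then
          (D ε'' ε' h2.2.le) ∘ₗ (hmt ε'') ∘ₗ (seqSum C D hmt k ε ε'' h2.1.le)
        else 0

section Data

variable (C : (Fin n → Bool) → Type) [∀ ε, AddCommGroup (C ε)] [∀ ε, Module (ZMod 2) (C ε)]
variable (D : ∀ ε ε' : Fin n → Bool, ε ≤ ε' → (C ε →ₗ[ZMod 2] C ε'))
variable (hmt : ∀ ε, C ε →ₗ[ZMod 2] C ε)
variable (Z : (Fin n → Bool) → Type) [∀ ε, AddCommGroup (Z ε)] [∀ ε, Module (ZMod 2) (Z ε)]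
variable (δZ : ∀ ε, Z ε →ₗ[ZMod 2] Z ε)
variable (π : ∀ ε, C ε →ₗ[ZMod 2] Z ε) (inc : ∀ ε, Z ε →ₗ[ZMod 2] C ε)

/-- The transferred hypercube structure maps on the `Z`-complexes. -/
noncomputable def trans (ε ε' : Fin n → Bool) (hle : ε ≤ ε') : Z ε →ₗ[ZMod 2] Z ε' :=
  if heq : ε = ε' then (castL n Z heq) ∘ₗ (δZ ε)
  else (π ε') ∘ₗ (seqSum n C D hmt n ε ε' hle) ∘ₗ (inc ε)

/-- The inclusion morphism `I`: `I_{ε,ε} = i_ε` and, for `ε < ε'`,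
`I_{ε,ε'} = Σ h_{ε_j} D_{ε_{j−1},ε_j} ⋯ h_{ε₂} D_{ε₁,ε₂} i_ε`. -/
noncomputable def Imor (ε ε' : Fin n → Bool) (hle : ε ≤ ε') : Z ε →ₗ[ZMod 2] C ε' :=
  if heq : ε = ε' then (castL n C heq) ∘ₗ (inc ε)
  else (hmt ε') ∘ₗ (seqSum n C D hmt n ε ε' hle) ∘ₗ (inc ε)

/-- The projection morphism `Π`: `Π_{ε,ε} = π_ε` and, for `ε < ε'`,
`Π_{ε,ε'} = Σ π_{ε'} D_{ε_{j−1},ε_j} h_{ε_{j−1}} ⋯ D_{ε₁,ε₂} h_{ε₁}`. -/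
noncomputable def Pmor (ε ε' : Fin n → Bool) (hle : ε ≤ ε') : C ε →ₗ[ZMod 2] Z ε' :=
  if heq : ε = ε' then (castL n Z heq) ∘ₗ (π ε)
  else (π ε') ∘ₗ (seqSum n C D hmt n ε ε' hle) ∘ₗ (hmt ε)

end Data


section Helpers

variable {n}

/-- weight of a vertex -/
def wt (ε : Fin n → Bool) : ℕ := (Finset.univ.filter (fun i => ε i = true)).card

lemma wt_lt {a b : Fin n → Bool} (h : a < b) : wt a < wt b := by
  apply Finset.card_lt_card
  obtain ⟨hle, i, hi⟩ := Pi.lt_def.1 h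
  rw [Finset.ssubset_iff_of_subset]
  · refine ⟨i, ?_, ?_⟩
    · have := Bool.lt_iff.1 hi
      simp [this.2]
    · have := Bool.lt_iff.1 hi
      simp [this.1]
  · intro j hj
    simp only [Finset.mem_filter, Finset.mem_univ, true_and] at hj ⊢
    exact Bool.le_iff_imp.1 (hle j) hj

lemma wt_le (a : Fin n → Bool) : wt a ≤ n := by
  have := Finset.card_filter_le (Finset.univ : Finset (Fin n)) (fun i => a i = true)
  simpa [wt] using this

variable {A B E : (Fin n → Bool) → Type}
  [∀ ε, AddCommGroup (A ε)] [∀ ε, Module (ZMod 2) (A ε)]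
  [∀ ε, AddCommGroup (B ε)] [∀ ε, Module (ZMod 2) (B ε)]
  [∀ ε, AddCommGroup (E ε)] [∀ ε, Module (ZMod 2) (E ε)]

/-- total map of a family -/
noncomputable def block (f : ∀ ε ε' : Fin n → Bool, ε ≤ ε' → (A ε →ₗ[ZMod 2] B ε')) :
    (∀ ε, A ε) →ₗ[ZMod 2] (∀ ε, B ε) :=
  LinearMap.pi fun ε' => ∑ ε, if h : ε ≤ ε' then f ε ε' h ∘ₗ LinearMap.proj ε else 0

/-- total map of the strict part -/
noncomputable def strict (f : ∀ ε ε' : Fin n → Bool, ε ≤ ε' → (A ε →ₗ[ZMod 2] B ε')) :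
    (∀ ε, A ε) →ₗ[ZMod 2] (∀ ε, B ε) :=
  LinearMap.pi fun ε' => ∑ ε, if h : ε < ε' then f ε ε' h.le ∘ₗ LinearMap.proj ε else 0

/-- diagonal map -/
noncomputable def diag (f : ∀ ε : Fin n → Bool, A ε →ₗ[ZMod 2] B ε) :
    (∀ ε, A ε) →ₗ[ZMod 2] (∀ ε, B ε) :=
  LinearMap.pi fun ε => f ε ∘ₗ LinearMap.proj ε

lemma diag_apply (f : ∀ ε : Fin n → Bool, A ε →ₗ[ZMod 2] B ε) (x : ∀ ε, A ε) (ε) :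
    diag f x ε = f ε (x ε) := rfl

lemma block_apply (f : ∀ ε ε' : Fin n → Bool, ε ≤ ε' → (A ε →ₗ[ZMod 2] B ε'))
    (x : ∀ ε, A ε) (ε') :
    block f x ε' = ∑ ε, if h : ε ≤ ε' then f ε ε' h (x ε) else 0 := by
  simp only [block, LinearMap.pi_apply, LinearMap.sum_apply]
  refine Finset.sum_congr rfl fun ε _ => ?_
  split_ifs <;> rfl

lemma strict_apply (f : ∀ ε ε' : Fin n → Bool, ε ≤ ε' → (A ε →ₗ[ZMod 2] B ε'))
    (x : ∀ ε, A ε) (ε') :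
    strict f x ε' = ∑ ε, if h : ε < ε' then f ε ε' h.le (x ε) else 0 := by
  simp only [strict, LinearMap.pi_apply, LinearMap.sum_apply]
  refine Finset.sum_congr rfl fun ε _ => ?_
  split_ifs <;> rfl

lemma block_eq (f : ∀ ε ε' : Fin n → Bool, ε ≤ ε' → (A ε →ₗ[ZMod 2] B ε')) :
    block f = diag (fun ε => f ε ε le_rfl) + strict f := by
  refine LinearMap.ext fun x => funext fun ε' => ?_
  rw [LinearMap.add_apply, Pi.add_apply, block_apply, strict_apply, diag_apply,
    ← Finset.add_sum_erase _ _ (Finset.mem_univ ε'),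
    ← Finset.add_sum_erase Finset.univ (fun ε => if h : ε < ε' then f ε ε' h.le (x ε) else 0)
      (Finset.mem_univ ε')]
  simp only [le_refl, dite_true, lt_irrefl, dite_false, zero_add]
  congr 1
  refine Finset.sum_congr rfl fun ε hε => ?_
  have hne := Finset.ne_of_mem_erase hε
  by_cases h : ε ≤ ε'
  · rw [dif_pos h, dif_pos (lt_of_le_of_ne h hne)]
  · rw [dif_neg h, dif_neg (fun h' => h h'.le)]

lemma block_inj {f g : ∀ ε ε' : Fin n → Bool, ε ≤ ε' → (A ε →ₗ[ZMod 2] B ε')}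
    (hfg : block f = block g) (ε ε') (h : ε ≤ ε') : f ε ε' h = g ε ε' h := by
  have key : ∀ (f : ∀ ε ε' : Fin n → Bool, ε ≤ ε' → (A ε →ₗ[ZMod 2] B ε')) (x : A ε),
      block f (Pi.single ε x) ε' = f ε ε' h x := by
    intro f x
    rw [block_apply, Finset.sum_eq_single ε]
    · rw [dif_pos h, Pi.single_eq_same]
    · intro b _ hb
      rw [Pi.single_eq_of_ne hb]
      simp
    · simp
  ext x
  rw [← key f, ← key g, hfg]

/-- composition of families -/
noncomputable def fcomp (g : ∀ ε ε' : Fin n → Bool, ε ≤ ε' → (B ε →ₗ[ZMod 2] E ε'))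
    (f : ∀ ε ε' : Fin n → Bool, ε ≤ ε' → (A ε →ₗ[ZMod 2] B ε')) :
    ∀ ε ε' : Fin n → Bool, ε ≤ ε' → (A ε →ₗ[ZMod 2] E ε') :=
  fun ε ε'' _ => ∑ ε' : Fin n → Bool,
    if h2 : ε ≤ ε' ∧ ε' ≤ ε'' then (g ε' ε'' h2.2) ∘ₗ (f ε ε' h2.1) else 0

lemma sum_add_fcomp {B' : (Fin n → Bool) → Type}
    [∀ ε, AddCommGroup (B' ε)] [∀ ε, Module (ZMod 2) (B' ε)]
    (g : ∀ ε ε' : Fin n → Bool, ε ≤ ε' → (B ε →ₗ[ZMod 2] E ε'))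
    (f : ∀ ε ε' : Fin n → Bool, ε ≤ ε' → (A ε →ₗ[ZMod 2] B ε'))
    (g' : ∀ ε ε' : Fin n → Bool, ε ≤ ε' → (B' ε →ₗ[ZMod 2] E ε'))
    (f' : ∀ ε ε' : Fin n → Bool, ε ≤ ε' → (A ε →ₗ[ZMod 2] B' ε'))
    (ε ε'' : Fin n → Bool) (hle : ε ≤ ε'') :
    (∑ ε' : Fin n → Bool,
      if h2 : ε ≤ ε' ∧ ε' ≤ ε'' then
        (g ε' ε'' h2.2) ∘ₗ (f ε ε' h2.1) + (g' ε' ε'' h2.2) ∘ₗ (f' ε ε' h2.1) else 0) =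
      fcomp g f ε ε'' hle + fcomp g' f' ε ε'' hle := by
  rw [fcomp, fcomp, ← Finset.sum_add_distrib]
  refine Finset.sum_congr rfl fun j _ => ?_
  split_ifs <;> simp

lemma block_fcomp (g : ∀ ε ε' : Fin n → Bool, ε ≤ ε' → (B ε →ₗ[ZMod 2] E ε'))
    (f : ∀ ε ε' : Fin n → Bool, ε ≤ ε' → (A ε →ₗ[ZMod 2] B ε')) :
    block (fcomp g f) = block g ∘ₗ block f := by
  refine LinearMap.ext fun x => funext fun ε'' => ?_
  rw [LinearMap.comp_apply, block_apply, block_apply]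
  have h1 : ∀ ε, (if h : ε ≤ ε'' then fcomp g f ε ε'' h (x ε) else 0) =
      ∑ ε' : Fin n → Bool, if h2 : ε ≤ ε' ∧ ε' ≤ ε'' then
        g ε' ε'' h2.2 (f ε ε' h2.1 (x ε)) else 0 := by
    intro ε
    by_cases h : ε ≤ ε''
    · rw [dif_pos h, fcomp, LinearMap.sum_apply]
      refine Finset.sum_congr rfl fun ε' _ => ?_
      split_ifs <;> rfl
    · rw [dif_neg h]
      symm
      refine Finset.sum_eq_zero fun ε' _ => ?_
      rw [dif_neg (fun h2 => h (h2.1.trans h2.2))]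
  simp only [h1]
  rw [Finset.sum_comm]
  refine Finset.sum_congr rfl fun ε' _ => ?_
  by_cases h : ε' ≤ ε''
  · rw [dif_pos h, block_apply, map_sum]
    refine Finset.sum_congr rfl fun ε _ => ?_
    by_cases h' : ε ≤ ε'
    · rw [dif_pos h', dif_pos ⟨h', h⟩]
    · rw [dif_neg h', dif_neg (fun h2 => h' h2.1), map_zero]
  · rw [dif_neg h]
    refine Finset.sum_eq_zero fun ε _ => ?_
    rw [dif_neg (fun h2 => h h2.2)]

lemma strict_diag (u : ∀ ε : Fin n → Bool, B ε →ₗ[ZMod 2] E ε)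
    (f : ∀ ε ε' : Fin n → Bool, ε ≤ ε' → (A ε →ₗ[ZMod 2] B ε')) :
    strict (fun ε ε' h => u ε' ∘ₗ f ε ε' h) = diag u ∘ₗ strict f := by
  refine LinearMap.ext fun x => funext fun ε'' => ?_
  rw [LinearMap.comp_apply, diag_apply, strict_apply, strict_apply, map_sum]
  refine Finset.sum_congr rfl fun ε _ => ?_
  split_ifs
  · rfl
  · simp

lemma strict_diag_right (u : ∀ ε : Fin n → Bool, A ε →ₗ[ZMod 2] B ε)
    (f : ∀ ε ε' : Fin n → Bool, ε ≤ ε' → (B ε →ₗ[ZMod 2] E ε')) :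
    strict (fun ε ε' h => f ε ε' h ∘ₗ u ε) = strict f ∘ₗ diag u := by
  refine LinearMap.ext fun x => funext fun ε'' => ?_
  rw [LinearMap.comp_apply, strict_apply, strict_apply]
  refine Finset.sum_congr rfl fun ε _ => ?_
  split_ifs <;> rfl

lemma strict_congr {f g : ∀ ε ε' : Fin n → Bool, ε ≤ ε' → (A ε →ₗ[ZMod 2] B ε')}
    (h : ∀ ε ε' (hl : ε < ε'), f ε ε' hl.le = g ε ε' hl.le) : strict f = strict g := by
  refine LinearMap.ext fun x => funext fun ε'' => ?_
  rw [strict_apply, strict_apply]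
  refine Finset.sum_congr rfl fun ε _ => ?_
  split_ifs with h'
  · rw [h _ _ h']
  · rfl

/-- a family which is diagonal or a sandwich -/
lemma block_sandwich (f : ∀ ε ε' : Fin n → Bool, ε ≤ ε' → (A ε →ₗ[ZMod 2] B ε'))
    (u : ∀ ε : Fin n → Bool, A ε →ₗ[ZMod 2] B ε)
    (g : ∀ ε ε' : Fin n → Bool, ε ≤ ε' → (A ε →ₗ[ZMod 2] B ε'))
    (hf : ∀ ε ε' h, f ε ε' h = if heq : ε = ε' then castL n B heq ∘ₗ u ε else g ε ε' h) :
    block f = diag u + strict g := by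
  rw [block_eq]
  congr 1
  · congr 1
    funext ε
    rw [hf, dif_pos rfl]
    rfl
  · apply strict_congr
    intro ε ε' hl
    rw [hf, dif_neg hl.ne]

lemma block_id :
    block (fun ε ε' (_ : ε ≤ ε') => if heq : ε = ε' then castL n A heq else 0) =
      LinearMap.id := by
  rw [block_sandwich (A := A) (B := A) _ (fun _ => LinearMap.id) (fun _ _ _ => 0)
    ?_]
  swap
  · intro ε ε' h
    rfl
  refine LinearMap.ext fun x => funext fun ε'' => ?_
  rw [LinearMap.add_apply, Pi.add_apply, strict_apply, diag_apply]
  simp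

lemma block_add (f g : ∀ ε ε' : Fin n → Bool, ε ≤ ε' → (A ε →ₗ[ZMod 2] B ε')) :
    block (fun ε ε' h => f ε ε' h + g ε ε' h) = block f + block g := by
  refine LinearMap.ext fun x => funext fun ε'' => ?_
  rw [LinearMap.add_apply, Pi.add_apply, block_apply, block_apply, block_apply,
    ← Finset.sum_add_distrib]
  refine Finset.sum_congr rfl fun ε _ => ?_
  split_ifs <;> simp

lemma block_zero :
    block (fun ε ε' (_ : ε ≤ ε') => (0 : A ε →ₗ[ZMod 2] B ε')) = 0 := by
  refine LinearMap.ext fun x => funext fun ε'' => ?_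
  rw [block_apply]
  simp

variable (D : ∀ ε ε' : Fin n → Bool, ε ≤ ε' → (A ε →ₗ[ZMod 2] A ε'))
  (h : ∀ ε, A ε →ₗ[ZMod 2] A ε)

lemma seqSum_stable (k : ℕ) : ∀ ε ε' (hle : ε ≤ ε'), wt ε' ≤ wt ε + k + 1 →
    seqSum n A D h (k + 1) ε ε' hle = seqSum n A D h k ε ε' hle := by
  induction k with
  | zero =>
    intro ε ε' hle hw
    simp only [seqSum]
    rw [Finset.sum_eq_zero, add_zero]
    intro ε'' _
    rw [dif_neg]
    rintro ⟨h1, h2⟩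
    have := wt_lt h1
    have := wt_lt h2
    omega
  | succ k ih =>
    intro ε ε' hle hw
    rw [seqSum]
    conv_rhs => rw [seqSum]
    congr 1
    refine Finset.sum_congr rfl fun ε'' _ => ?_
    split_ifs with h2
    · have := wt_lt h2.2
      rw [ih _ _ _ (by omega)]
    · rfl

lemma strict_seqSum_succ (k : ℕ) : strict (seqSum n A D h (k + 1)) =
    strict D + strict D ∘ₗ diag h ∘ₗ strict (seqSum n A D h k) := by
  refine LinearMap.ext fun x => funext fun ε'' => ?_
  rw [LinearMap.add_apply, Pi.add_apply, LinearMap.comp_apply, LinearMap.comp_apply,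
    strict_apply, strict_apply, strict_apply]
  have h1 : ∀ ε, (if h' : ε < ε'' then seqSum n A D h (k + 1) ε ε'' h'.le (x ε) else 0) =
      (if h' : ε < ε'' then D ε ε'' h'.le (x ε) else 0) +
      ∑ ε' : Fin n → Bool, if h2 : ε < ε' ∧ ε' < ε'' then
        D ε' ε'' h2.2.le (h ε' (seqSum n A D h k ε ε' h2.1.le (x ε))) else 0 := by
    intro ε
    by_cases hl : ε < ε''
    · rw [dif_pos hl, dif_pos hl, seqSum, LinearMap.add_apply, LinearMap.sum_apply]
      congr 1
      refine Finset.sum_congr rfl fun ε' _ => ?_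
      split_ifs <;> rfl
    · rw [dif_neg hl, dif_neg hl, zero_add]
      symm
      refine Finset.sum_eq_zero fun ε' _ => ?_
      rw [dif_neg (fun h2 => hl (h2.1.trans h2.2))]
  simp only [h1]
  rw [Finset.sum_add_distrib]
  congr 1
  rw [Finset.sum_comm]
  refine Finset.sum_congr rfl fun ε' _ => ?_
  by_cases hl : ε' < ε''
  · rw [dif_pos hl, diag_apply, strict_apply, map_sum, map_sum]
    refine Finset.sum_congr rfl fun ε _ => ?_
    by_cases h' : ε < ε'
    · rw [dif_pos h', dif_pos ⟨h', hl⟩]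
    · rw [dif_neg h', dif_neg (fun h2 => h' h2.1), map_zero, map_zero]
  · rw [dif_neg hl]
    refine Finset.sum_eq_zero fun ε _ => ?_
    rw [dif_neg (fun h2 => hl h2.2)]

lemma strict_seqSum_succ' (k : ℕ) : strict (seqSum n A D h (k + 1)) =
    strict D + strict (seqSum n A D h k) ∘ₗ diag h ∘ₗ strict D := by
  induction k with
  | zero =>
    rw [strict_seqSum_succ]
    rfl
  | succ k ih =>
    have e := strict_seqSum_succ D h k
    rw [strict_seqSum_succ D h (k + 1)]
    conv_rhs => rw [e]
    rw [ih]
    simp only [LinearMap.comp_add, LinearMap.add_comp, LinearMap.comp_assoc]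

lemma strict_seqSum_stable : strict (seqSum n A D h (n + 1)) = strict (seqSum n A D h n) := by
  apply strict_congr
  intro ε ε' hl
  apply seqSum_stable
  have := wt_le ε'
  omega

end Helpers

section Algebra

variable {V W : Type*} [AddCommGroup V] [Module (ZMod 2) V] [AddCommGroup W] [Module (ZMod 2) W]

lemma key_alg (d P h A : V →ₗ[ZMod 2] V) (i : W →ₗ[ZMod 2] V) (p : V →ₗ[ZMod 2] W)
    (hdd : ∀ x, d (d x) = 0)
    (hDD : ∀ x, d (d x) + d (P x) + P (d x) + P (P x) = 0)
    (hip : ∀ x, i (p x) = x + d (h x) + h (d x))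
    (hA1 : ∀ x, A x = P x + P (h (A x)))
    (hA2 : ∀ x, A x = P x + A (h (P x))) (x : V) :
    d (A x) + A (d x) + A (i (p (A x))) = 0 := by
  have two : ∀ v : V, v + v = 0 := fun v => by
    have : (2 : ZMod 2) • v = 0 := by
      rw [show (2 : ZMod 2) = 0 from rfl, zero_smul]
    rwa [two_smul] at this
  -- X (1 + hP) is killed by (1 + Ph)
  have s1 : ∀ y, A (y + h (P y)) = P y := fun y => by
    rw [map_add]; nth_rw 1 [hA2 y]; rw [add_assoc, two, add_zero]
  have s2 : ∀ y, A y + P (h (A y)) = P y := fun y => by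
    nth_rw 1 [hA1 y]; rw [add_assoc, two, add_zero]
  have s3 : ∀ v, v + P (h v) = 0 → v = 0 := fun v hv => by
    have e : A (h (v + P (h v))) = P (h v) := by rw [map_add]; exact s1 (h v)
    rw [hv, map_zero, map_zero] at e
    rwa [← e, add_zero] at hv
  -- every x is of the form y + h P y
  have s4 : ∃ y, x = y + h (P y) := by
    refine ⟨x + h (A x), ?_⟩
    rw [map_add P, ← hA1, add_assoc, two, add_zero]
  obtain ⟨y, rfl⟩ := s4
  apply s3
  have w : A (d (y + h (P y))) + A (i (p (P y))) = A (d y + P y + h (d (P y))) := by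
    rw [← map_add A, hip, map_add d]
    congr 1
    linear_combination (norm := skip) two (d (h (P y)))
    abel
  rw [s1, add_assoc (d (P y)), w]
  have e1 := s2 (d y + P y + h (d (P y)))
  have e2 := hDD y
  rw [hdd, zero_add] at e2
  simp only [map_add] at e1 ⊢
  linear_combination (norm := skip) e1 + e2 + two (P (h (d (P y))))
  abel

lemma two_v (v : V) : v + v = 0 := by
  have : (2 : ZMod 2) • v = 0 := by
    rw [show (2 : ZMod 2) = 0 from rfl, zero_smul]
  rwa [two_smul] at this

lemma main_alg (d P h A : V →ₗ[ZMod 2] V) (i : W →ₗ[ZMod 2] V) (p : V →ₗ[ZMod 2] W)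
    (δ : W →ₗ[ZMod 2] W)
    (hdd : ∀ x, d (d x) = 0)
    (hDD : ∀ x, d (d x) + d (P x) + P (d x) + P (P x) = 0)
    (hpc : ∀ x, δ (p x) = p (d x))
    (hic : ∀ x, d (i x) = i (δ x))
    (hpi : ∀ x, p (i x) = x)
    (hip : ∀ x, i (p x) = x + d (h x) + h (d x))
    (hhh : ∀ x, h (h x) = 0)
    (hph : ∀ x, p (h x) = 0)
    (hhi : ∀ x, h (i x) = 0)
    (hA1 : ∀ x, A x = P x + P (h (A x)))
    (hA2 : ∀ x, A x = P x + A (h (P x))) :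
    ((d + P) ∘ₗ (i + h ∘ₗ A ∘ₗ i) + (i + h ∘ₗ A ∘ₗ i) ∘ₗ (δ + p ∘ₗ A ∘ₗ i) = 0) ∧
    ((δ + p ∘ₗ A ∘ₗ i) ∘ₗ (p + p ∘ₗ A ∘ₗ h) + (p + p ∘ₗ A ∘ₗ h) ∘ₗ (d + P) = 0) ∧
    ((p + p ∘ₗ A ∘ₗ h) ∘ₗ (i + h ∘ₗ A ∘ₗ i) = LinearMap.id) ∧
    ((i + h ∘ₗ A ∘ₗ i) ∘ₗ (p + p ∘ₗ A ∘ₗ h) =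
      LinearMap.id + ((d + P) ∘ₗ (h + h ∘ₗ A ∘ₗ h) + (h + h ∘ₗ A ∘ₗ h) ∘ₗ (d + P))) := by
  have key := key_alg d P h A i p hdd hDD hip hA1 hA2
  refine ⟨?_, ?_, ?_, ?_⟩ <;> refine LinearMap.ext fun x => ?_ <;>
    simp only [LinearMap.add_apply, LinearMap.comp_apply, LinearMap.zero_apply,
      LinearMap.id_apply, map_add]
  · have k := congrArg h (key (i x))
    simp only [map_add, map_zero, hip, hic] at k ⊢
    linear_combination (norm := skip) (1 : ZMod 2) • k + hA1 (i x)
    match_scalars <;> decide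
  · have k := congrArg p (key (h x))
    simp only [map_add, map_zero, hip, hpc] at k ⊢
    linear_combination (norm := skip) (1 : ZMod 2) • k + congrArg p (hA2 x)
    simp only [map_add]
    match_scalars <;> decide
  · simp only [hpi, hph, hhi, hhh, map_zero, add_zero]
  · have k := congrArg h (key (h x))
    simp only [map_add, map_zero, hip] at k ⊢
    linear_combination (norm := skip) (1 : ZMod 2) • k + (hA1 (h x)) + congrArg h (hA2 x)
    simp only [map_add]
    match_scalars <;> decide

end Algebra

/-- homological perturbation lemma for hypercubes, morphisms.
With `𝒵` the transferred hypercube, `I` is a morphism of hypercubes `𝒵 → 𝒞`, `Π` is a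
morphism `𝒞 → 𝒵`, `Π∘I` is the identity morphism of `𝒵`, and `I∘Π` equals the identity
morphism of `𝒞` plus `∂_Mor(H)` for some collection `H`. -/
theorem statement_8
    (C : (Fin n → Bool) → Type) [∀ ε, AddCommGroup (C ε)] [∀ ε, Module (ZMod 2) (C ε)]
    (D : ∀ ε ε' : Fin n → Bool, ε ≤ ε' → (C ε →ₗ[ZMod 2] C ε'))
    (hD : ∀ ε ε'' : Fin n → Bool, ε ≤ ε'' →
      (∑ ε' : Fin n → Bool,
        if h2 : ε ≤ ε' ∧ ε' ≤ ε'' then (D ε' ε'' h2.2) ∘ₗ (D ε ε' h2.1) else 0) = 0)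
    (Z : (Fin n → Bool) → Type) [∀ ε, AddCommGroup (Z ε)] [∀ ε, Module (ZMod 2) (Z ε)]
    (δZ : ∀ ε, Z ε →ₗ[ZMod 2] Z ε) (hδZ : ∀ ε, δZ ε ∘ₗ δZ ε = 0)
    (π : ∀ ε, C ε →ₗ[ZMod 2] Z ε) (inc : ∀ ε, Z ε →ₗ[ZMod 2] C ε)
    (hmt : ∀ ε, C ε →ₗ[ZMod 2] C ε)
    (hπchain : ∀ ε, δZ ε ∘ₗ π ε = π ε ∘ₗ D ε ε le_rfl)
    (hincchain : ∀ ε, D ε ε le_rfl ∘ₗ inc ε = inc ε ∘ₗ δZ ε)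
    (hπinc : ∀ ε, π ε ∘ₗ inc ε = LinearMap.id)
    (hincπ : ∀ ε, inc ε ∘ₗ π ε =
      LinearMap.id + D ε ε le_rfl ∘ₗ hmt ε + hmt ε ∘ₗ D ε ε le_rfl)
    (hhh : ∀ ε, hmt ε ∘ₗ hmt ε = 0)
    (hπh : ∀ ε, π ε ∘ₗ hmt ε = 0)
    (hhinc : ∀ ε, hmt ε ∘ₗ inc ε = 0) :
    -- (1) `I` is a morphism of hypercubes from `𝒵` to `𝒞`:
    (∀ ε ε'' : Fin n → Bool, ∀ _ : ε ≤ ε'',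
      (∑ ε' : Fin n → Bool,
        if h2 : ε ≤ ε' ∧ ε' ≤ ε'' then
          (D ε' ε'' h2.2) ∘ₗ (Imor n C D hmt Z inc ε ε' h2.1) +
            (Imor n C D hmt Z inc ε' ε'' h2.2) ∘ₗ
              (trans n C D hmt Z δZ π inc ε ε' h2.1)
        else 0) = 0) ∧
    -- (2) `Π` is a morphism of hypercubes from `𝒞` to `𝒵`:
    (∀ ε ε'' : Fin n → Bool, ∀ _ : ε ≤ ε'',
      (∑ ε' : Fin n → Bool,
        if h2 : ε ≤ ε' ∧ ε' ≤ ε'' then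
          (trans n C D hmt Z δZ π inc ε' ε'' h2.2) ∘ₗ
            (Pmor n C D hmt Z π ε ε' h2.1) +
            (Pmor n C D hmt Z π ε' ε'' h2.2) ∘ₗ (D ε ε' h2.1)
        else 0) = 0) ∧
    -- (3) `Π ∘ I` is the identity morphism of `𝒵`:
    (∀ ε ε'' : Fin n → Bool, ∀ _ : ε ≤ ε'',
      (∑ ε' : Fin n → Bool,
        if h2 : ε ≤ ε' ∧ ε' ≤ ε'' then
          (Pmor n C D hmt Z π ε' ε'' h2.2) ∘ₗ (Imor n C D hmt Z inc ε ε' h2.1)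
        else 0) =
      (if heq : ε = ε'' then castL n Z heq else 0)) ∧
    -- (4) `I ∘ Π` is the identity morphism of `𝒞` plus `∂_Mor(H)`:
    (∃ H : ∀ ε ε' : Fin n → Bool, ε ≤ ε' → (C ε →ₗ[ZMod 2] C ε'),
      ∀ ε ε'' : Fin n → Bool, ∀ hle : ε ≤ ε'',
        (∑ ε' : Fin n → Bool,
          if h2 : ε ≤ ε' ∧ ε' ≤ ε'' then
            (Imor n C D hmt Z inc ε' ε'' h2.2) ∘ₗ (Pmor n C D hmt Z π ε ε' h2.1)
          else 0) =
        (if heq : ε = ε'' then castL n C heq else 0) +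
          (∑ ε' : Fin n → Bool,
            if h2 : ε ≤ ε' ∧ ε' ≤ ε'' then
              (D ε' ε'' h2.2) ∘ₗ (H ε ε' h2.1) + (H ε' ε'' h2.2) ∘ₗ (D ε ε' h2.1)
            else 0)) := by
  have hdd : ∀ ε, D ε ε le_rfl ∘ₗ D ε ε le_rfl = 0 := by
    intro ε
    have e := hD ε ε le_rfl
    rw [Finset.sum_eq_single ε] at e
    · rwa [dif_pos ⟨le_rfl, le_rfl⟩] at e
    · intro b _ hb
      rw [dif_neg (fun h2 => hb (le_antisymm h2.2 h2.1))]
    · simp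
  have hDD : block D ∘ₗ block D = 0 := by
    rw [← block_fcomp, ← block_zero]
    congr 1
    funext ε ε'' hle
    exact hD ε ε'' hle
  have hBD := block_eq D
  have hBI : block (Imor n C D hmt Z inc) =
      diag inc + diag hmt ∘ₗ strict (seqSum n C D hmt n) ∘ₗ diag inc := by
    rw [block_sandwich (Imor n C D hmt Z inc) inc _ (fun _ _ _ => rfl),
      strict_diag hmt (fun ε ε' hl => seqSum n C D hmt n ε ε' hl ∘ₗ inc ε), strict_diag_right]
  have hBP : block (Pmor n C D hmt Z π) =
      diag π + diag π ∘ₗ strict (seqSum n C D hmt n) ∘ₗ diag hmt := by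
    rw [block_sandwich (Pmor n C D hmt Z π) π _ (fun _ _ _ => rfl),
      strict_diag π (fun ε ε' hl => seqSum n C D hmt n ε ε' hl ∘ₗ hmt ε), strict_diag_right]
  have hBT : block (trans n C D hmt Z δZ π inc) =
      diag δZ + diag π ∘ₗ strict (seqSum n C D hmt n) ∘ₗ diag inc := by
    rw [block_sandwich (trans n C D hmt Z δZ π inc) δZ _ (fun _ _ _ => rfl),
      strict_diag π (fun ε ε' hl => seqSum n C D hmt n ε ε' hl ∘ₗ inc ε), strict_diag_right]
  let H : ∀ ε ε' : Fin n → Bool, ε ≤ ε' → (C ε →ₗ[ZMod 2] C ε') := fun ε ε' hl =>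
    if heq : ε = ε' then castL n C heq ∘ₗ hmt ε
    else hmt ε' ∘ₗ seqSum n C D hmt n ε ε' hl ∘ₗ hmt ε
  have hBH : block H = diag hmt + diag hmt ∘ₗ strict (seqSum n C D hmt n) ∘ₗ diag hmt := by
    rw [block_sandwich H hmt _ (fun _ _ _ => rfl),
      strict_diag hmt (fun ε ε' hl => seqSum n C D hmt n ε ε' hl ∘ₗ hmt ε), strict_diag_right]
  have hA1 := strict_seqSum_succ D hmt n
  have hA2 := strict_seqSum_succ' D hmt n
  rw [strict_seqSum_stable] at hA1 hA2
  obtain ⟨m1, m2, m3, m4⟩ := main_alg (diag (fun ε => D ε ε le_rfl)) (strict D) (diag hmt)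
    (strict (seqSum n C D hmt n)) (diag inc) (diag π) (diag δZ)
    (fun x => funext fun ε => LinearMap.congr_fun (hdd ε) (x ε))
    (fun x => by
      have e := LinearMap.congr_fun hDD x
      rw [hBD] at e
      simp only [LinearMap.add_apply, LinearMap.comp_apply, LinearMap.zero_apply, map_add] at e
      rw [← e]
      abel)
    (fun x => funext fun ε => LinearMap.congr_fun (hπchain ε) (x ε))
    (fun x => funext fun ε => LinearMap.congr_fun (hincchain ε) (x ε))
    (fun x => funext fun ε => LinearMap.congr_fun (hπinc ε) (x ε))
    (fun x => funext fun ε => LinearMap.congr_fun (hincπ ε) (x ε))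
    (fun x => funext fun ε => LinearMap.congr_fun (hhh ε) (x ε))
    (fun x => funext fun ε => LinearMap.congr_fun (hπh ε) (x ε))
    (fun x => funext fun ε => LinearMap.congr_fun (hhinc ε) (x ε))
    (fun x => LinearMap.congr_fun hA1 x)
    (fun x => LinearMap.congr_fun hA2 x)
  rw [← hBD, ← hBI, ← hBT] at m1
  rw [← hBD, ← hBP, ← hBT] at m2
  rw [← hBI, ← hBP] at m3
  rw [← hBI, ← hBP, ← hBH, ← hBD] at m4
  simp only [← block_fcomp, ← block_add] at m1 m2 m3 m4
  rw [← block_zero] at m1 m2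
  rw [← block_id] at m3
  rw [← block_id, ← block_add] at m4
  refine ⟨?_, ?_, ?_, H, ?_⟩
  · intro ε ε'' hle
    rw [sum_add_fcomp _ _ _ _ ε ε'' hle]
    exact block_inj m1 ε ε'' hle
  · intro ε ε'' hle
    rw [sum_add_fcomp _ _ _ _ ε ε'' hle]
    exact block_inj m2 ε ε'' hle
  · intro ε ε'' hle
    exact block_inj m3 ε ε'' hle
  · intro ε ε'' hle
    rw [sum_add_fcomp _ _ _ _ ε ε'' hle]
    exact block_inj m4 ε ε'' hle

end HypercubeHPL8
end

section
/- Let 𝒞 = (C_ε, D_{ε,ε′}) be an n-dimensional hypercube of chain complexes over 𝔽₂, and suppose given chain complexes (Z_ε, δ_ε) and maps π_ε : C_ε → Z_ε, i_ε : Z_ε → C_ε, h_ε : C_ε → C_ε such that π_ε and i_ε are chain maps and π_ε∘i_ε = id, i_ε∘π_ε = id + D_{ε,ε}∘h_ε + h_ε∘D_{ε,ε}, h_ε∘h_ε = 0, π_ε∘h_ε = 0, h_ε∘i_ε = 0. Suppose moreover that each C_ε carries a direct sum decomposition C_ε = ⊕_{k=1}^{m} F_ε^k (a filtration level) such that: (i)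 the image of i_ε lies in F_ε^1; (ii) π_ε vanishes on F_ε^k for all k ≥ 2; (iii) each h_ε maps F_ε^k into ⊕_{k′ ≥ k+1} F_ε^{k′}; (iv) for ε < ε′ with |ε′ − ε| = 1, D_{ε,ε′} maps F_ε^k into F_{ε′}^k; and (v) for ε < ε′ with |ε′ − ε| ≥ 2, D_{ε,ε′} maps F_ε^k into ⊕_{k′ ≥ k+1} F_{ε′}^{k′}. Then the transferred hypercube structure maps δ_{ε,ε′} = Σ π_{ε′} D_{ε_{j−1},ε_j} h_{ε_{j−1}} ⋯ h_{ε₂} D_{ε₁,ε₂} i_ε (summed over strictly increasing sequences ε = ε₁ < ⋯ < ε_j = ε′) satisfy δ_{ε,ε′} = π_{ε′} ∘ D_{ε,ε′} ∘ i_ε whenever |ε′ − ε| = 1, and δ_{ε,ε′} = 0 whenever |ε′ − ε| ≥ 2. -/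
open scoped Classical

namespace HypercubeHPL9

variable (n : ℕ)

/-- The number of coordinates where two cube points differ, `|ε′ − ε|`. -/
noncomputable def diffCard (ε ε' : Fin n → Bool) : ℕ :=
  (Finset.univ.filter fun i => ε i ≠ ε' i).card

/-- The sum, over all strictly increasing sequences `ε = ε₁ < ε₂ < ⋯ < ε_j = ε'`
(of length `j ≤ k + 2`), of `D_{ε_{j−1},ε_j} ∘ h_{ε_{j−1}} ∘ ⋯ ∘ h_{ε₂} ∘ D_{ε₁,ε₂}`.
Taking `k = n` gives the full sum over all strictly increasing sequences. -/
noncomputable def seqSum (C : (Fin n → Bool) → Type) [∀ ε, AddCommGroup (C ε)]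
    [∀ ε, Module (ZMod 2) (C ε)]
    (D : ∀ ε ε' : Fin n → Bool, ε ≤ ε' → (C ε →ₗ[ZMod 2] C ε'))
    (hmt : ∀ ε, C ε →ₗ[ZMod 2] C ε) :
    ℕ → ∀ ε ε' : Fin n → Bool, ε ≤ ε' → (C ε →ₗ[ZMod 2] C ε')
  | 0, ε, ε', hle => D ε ε' hle
  | (k + 1), ε, ε', hle => D ε ε' hle +
      ∑ ε'' : Fin n → Bool,
        if h2 : ε < ε'' ∧ ε'' < ε' then
          (D ε'' ε' h2.2.le) ∘ₗ (hmt ε'') ∘ₗ (seqSum C D hmt k ε ε'' h2.1.le)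
        else 0

/-- filtered vanishing of the transferred structure maps.
Given a hypercube of chain complexes with vertex-wise strong deformation retraction data
and a compatible finite filtration `C_ε = ⊕_{k} F_ε^k` as in hypotheses (i)–(v), the
transferred structure maps `δ_{ε,ε'} = Σ π D h ⋯ h D i` satisfy
`δ_{ε,ε'} = π_{ε'} ∘ D_{ε,ε'} ∘ i_ε` when `|ε′−ε| = 1` and `δ_{ε,ε'} = 0` when
`|ε′−ε| ≥ 2`. -/
theorem statement_9
    (C : (Fin n → Bool) → Type) [∀ ε, AddCommGroup (C ε)] [∀ ε, Module (ZMod 2) (C ε)]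
    (D : ∀ ε ε' : Fin n → Bool, ε ≤ ε' → (C ε →ₗ[ZMod 2] C ε'))
    (hD : ∀ ε ε'' : Fin n → Bool, ε ≤ ε'' →
      (∑ ε' : Fin n → Bool,
        if h2 : ε ≤ ε' ∧ ε' ≤ ε'' then (D ε' ε'' h2.2) ∘ₗ (D ε ε' h2.1) else 0) = 0)
    (Z : (Fin n → Bool) → Type) [∀ ε, AddCommGroup (Z ε)] [∀ ε, Module (ZMod 2) (Z ε)]
    (δZ : ∀ ε, Z ε →ₗ[ZMod 2] Z ε) (hδZ : ∀ ε, δZ ε ∘ₗ δZ ε = 0)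
    (π : ∀ ε, C ε →ₗ[ZMod 2] Z ε) (inc : ∀ ε, Z ε →ₗ[ZMod 2] C ε)
    (hmt : ∀ ε, C ε →ₗ[ZMod 2] C ε)
    (hπchain : ∀ ε, δZ ε ∘ₗ π ε = π ε ∘ₗ D ε ε le_rfl)
    (hincchain : ∀ ε, D ε ε le_rfl ∘ₗ inc ε = inc ε ∘ₗ δZ ε)
    (hπinc : ∀ ε, π ε ∘ₗ inc ε = LinearMap.id)
    (hincπ : ∀ ε, inc ε ∘ₗ π ε =
      LinearMap.id + D ε ε le_rfl ∘ₗ hmt ε + hmt ε ∘ₗ D ε ε le_rfl)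
    (hhh : ∀ ε, hmt ε ∘ₗ hmt ε = 0)
    (hπh : ∀ ε, π ε ∘ₗ hmt ε = 0)
    (hhinc : ∀ ε, hmt ε ∘ₗ inc ε = 0)
    -- the filtration `C_ε = ⊕_{k=1}^m F_ε^k`:
    (m : ℕ) (hm : 0 < m)
    (F : ∀ ε : Fin n → Bool, Fin m → Submodule (ZMod 2) (C ε))
    (hinternal : ∀ ε, DirectSum.IsInternal (F ε))
    -- (i) the image of `i_ε` lies in the lowest filtration level `F_ε^1`:
    (hi1 : ∀ ε, LinearMap.range (inc ε) ≤ F ε ⟨0, hm⟩)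
    -- (ii) `π_ε` vanishes on `F_ε^k` for `k ≥ 2`:
    (hπ2 : ∀ ε (k : Fin m), k ≠ ⟨0, hm⟩ → ∀ x ∈ F ε k, π ε x = 0)
    -- (iii) `h_ε` strictly raises the filtration level:
    (hh2 : ∀ ε (k : Fin m), ∀ x ∈ F ε k,
      hmt ε x ∈ ⨆ (k' : Fin m) (_ : k < k'), F ε k')
    -- (iv) length-one structure maps preserve the filtration level:
    (hD1 : ∀ ε ε' : Fin n → Bool, ∀ hle : ε ≤ ε', diffCard n ε ε' = 1 →
      ∀ (k : Fin m), ∀ x ∈ F ε k, D ε ε' hle x ∈ F ε' k)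
    -- (v) longer structure maps strictly raise the filtration level:
    (hD2 : ∀ ε ε' : Fin n → Bool, ∀ hle : ε ≤ ε', 2 ≤ diffCard n ε ε' →
      ∀ (k : Fin m), ∀ x ∈ F ε k,
        D ε ε' hle x ∈ ⨆ (k' : Fin m) (_ : k < k'), F ε' k') :
    (∀ ε ε' : Fin n → Bool, ∀ hle : ε ≤ ε', diffCard n ε ε' = 1 →
      (π ε') ∘ₗ (seqSum n C D hmt n ε ε' hle) ∘ₗ (inc ε) =
        (π ε') ∘ₗ (D ε ε' hle) ∘ₗ (inc ε)) ∧
    (∀ ε ε' : Fin n → Bool, ∀ hle : ε ≤ ε', 2 ≤ diffCard n ε ε' →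
      (π ε') ∘ₗ (seqSum n C D hmt n ε ε' hle) ∘ₗ (inc ε) = 0) := by
  have hπU : ∀ ε, ∀ x ∈ (⨆ (k' : Fin m) (_ : (⟨0, hm⟩ : Fin m) < k'), F ε k'), π ε x = 0 := by
    intro ε x hx
    have : (⨆ (k' : Fin m) (_ : (⟨0, hm⟩ : Fin m) < k'), F ε k') ≤ LinearMap.ker (π ε) :=
      iSup₂_le fun k hk y hy => hπ2 ε k hk.ne' y hy
    exact this hx
  have mono : ∀ ε (k : Fin m), (⨆ (k' : Fin m) (_ : k < k'), F ε k') ≤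
      ⨆ (k' : Fin m) (_ : (⟨0, hm⟩ : Fin m) < k'), F ε k' := by
    intro ε k
    refine iSup₂_le fun k' hk' => ?_
    refine le_iSup₂_of_le k' (lt_of_le_of_lt ?_ hk') le_rfl
    exact Nat.zero_le _
  have hhU : ∀ ε x, hmt ε x ∈ (⨆ (k' : Fin m) (_ : (⟨0, hm⟩ : Fin m) < k'), F ε k') := by
    intro ε x
    have h1 : (⨆ k, F ε k) ≤
        (⨆ (k' : Fin m) (_ : (⟨0, hm⟩ : Fin m) < k'), F ε k').comap (hmt ε) :=
      iSup_le fun k y hy => mono ε k (hh2 ε k y hy)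
    rw [(hinternal ε).submodule_iSup_eq_top] at h1
    exact h1 Submodule.mem_top
  have hDU : ∀ ε ε' : Fin n → Bool, ∀ hlt : ε < ε', ∀ x,
      x ∈ (⨆ (k' : Fin m) (_ : (⟨0, hm⟩ : Fin m) < k'), F ε k') →
      D ε ε' hlt.le x ∈ (⨆ (k' : Fin m) (_ : (⟨0, hm⟩ : Fin m) < k'), F ε' k') := by
    intro ε ε' hlt x hx
    have h1 : (⨆ (k' : Fin m) (_ : (⟨0, hm⟩ : Fin m) < k'), F ε k') ≤
        (⨆ (k' : Fin m) (_ : (⟨0, hm⟩ : Fin m) < k'), F ε' k').comap (D ε ε' hlt.le) := by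
      refine iSup₂_le fun k hk y hy => ?_
      have hpos : 0 < diffCard n ε ε' := by
        obtain ⟨i, hi⟩ := Function.ne_iff.mp hlt.ne
        exact Finset.card_pos.mpr ⟨i, by simpa using hi⟩
      rcases Nat.lt_or_ge 1 (diffCard n ε ε') with h | h
      · exact mono ε' k (hD2 ε ε' hlt.le h k y hy)
      · have h3 := hD1 ε ε' hlt.le (by omega) k y hy
        exact (le_iSup₂_of_le (f := fun (k' : Fin m) (_ : (⟨0, hm⟩ : Fin m) < k') => F ε' k')
          k hk le_rfl) h3
    exact h1 hx
  have key : ∀ (k : ℕ) (ε ε' : Fin n → Bool) (hle : ε ≤ ε'),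
      (π ε') ∘ₗ (seqSum n C D hmt k ε ε' hle) ∘ₗ (inc ε) =
        (π ε') ∘ₗ (D ε ε' hle) ∘ₗ (inc ε) := by
    intro k ε ε' hle
    cases k with
    | zero => simp only [seqSum]
    | succ k =>
      ext z
      simp only [seqSum, LinearMap.comp_apply, LinearMap.add_apply, map_add,
        LinearMap.sum_apply, map_sum]
      rw [add_eq_left]
      refine Finset.sum_eq_zero fun ε'' _ => ?_
      split_ifs with h2
      · exact hπU _ _ (hDU _ _ h2.2 _ (hhU _ _))
      · simp
  refine ⟨fun ε ε' hle _ => key n ε ε' hle, fun ε ε' hle h => ?_⟩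
  rw [key]
  ext z
  exact hπU _ _ (hD2 ε ε' hle h ⟨0, hm⟩ _ (hi1 ε ⟨z, rfl⟩))

end HypercubeHPL9
end
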